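/- For every integer n ≥ 2095, (log p(n+1))/(n+1) + (log p(n-1))/(n-1) - 2·(log p(n))/n < 3π/(√24 · n^{5/2} + 3π). -/

import Mathlib

open Real

/-- The partition function, as a real number. -/
noncomputable def p (n : ℕ) : ℝ := (Fintype.card (Nat.Partition n) : ℝ)

namespace PartitionAsymptotics

section GeneratingFunction

open Filter Topology Complex PowerSeries PowerSeries.WithPiTopology

/-! ### The generating function -/

/-- The power series `∑ X ^ (k * j)`. -/
noncomputable def geomSeries (k : ℕ) : ℝ⟦X⟧ := PowerSeries.mk fun n ↦ if k ∣ n then 1 else 0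

/-- The generating function of partitions into parts of size at most `m`. -/
noncomputable def boundedGenFun (m : ℕ) : ℝ⟦X⟧ := ∏ i ∈ Finset.range m, geomSeries (i + 1)

/-- Euler's product `∏ (1 - q ^ n)`. -/
noncomputable def eulerProd (q : ℂ) : ℂ := ∏' n : ℕ, (1 - q ^ (n + 1))

lemma p_nonneg (n : ℕ) : 0 ≤ p n := Nat.cast_nonneg _

lemma p_pos (n : ℕ) : 0 < p n := Nat.cast_pos.mpr Fintype.card_pos

lemma p_zero : p 0 = 1 := by simp [p]

lemma p_le_two_pow (n : ℕ) : p n ≤ 2 ^ n := by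
  have h := Fintype.card_le_of_surjective _ (Nat.Partition.ofComposition_surj (n := n))
  rw [composition_card] at h
  have h2 : 2 ^ (n - 1) ≤ 2 ^ n := Nat.pow_le_pow_right (by norm_num) (Nat.sub_le _ _)
  unfold p
  exact_mod_cast h.trans h2

lemma tsum_X_pow_mul (i : ℕ) : ∑' j : ℕ, (X : ℝ⟦X⟧) ^ ((i + 1) * j) = geomSeries (i + 1) := by
  refine HasSum.tsum_eq ?_
  rw [PowerSeries.WithPiTopology.hasSum_iff_hasSum_coeff]
  intro d
  simp only [geomSeries, coeff_mk, coeff_X_pow]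
  split_ifs with h
  · obtain ⟨c, rfl⟩ := h
    have h2 : (fun j : ℕ ↦ if (i + 1) * c = (i + 1) * j then (1 : ℝ) else 0) =
        fun j ↦ if j = c then 1 else 0 := by
      ext j
      simp [eq_comm]
    rw [h2]
    exact hasSum_ite_eq c (1 : ℝ)
  · have h2 : (fun j : ℕ ↦ if d = (i + 1) * j then (1 : ℝ) else 0) = fun _ ↦ 0 := by
      ext j
      rw [if_neg]
      rintro rfl
      exact h (dvd_mul_right _ _)
    rw [h2]
    exact hasSum_zero

lemma hasProd_geomSeries :
    HasProd (fun i : ℕ ↦ geomSeries (i + 1)) (PowerSeries.mk fun n ↦ p n) := by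
  have h := Nat.Partition.hasProd_powerSeriesMk_card_restricted ℝ (fun _ ↦ True)
  have h1 : (fun i : ℕ ↦ if True then ∑' j : ℕ, (X : ℝ⟦X⟧) ^ ((i + 1) * j) else 1) =
      fun i ↦ geomSeries (i + 1) := funext fun i ↦ by rw [if_pos trivial, tsum_X_pow_mul]
  have h2 : (PowerSeries.mk fun n ↦ (p n : ℝ)) =
      PowerSeries.mk fun n ↦ ((Nat.Partition.restricted n fun _ ↦ True).card : ℝ) := by
    ext n
    simp [p, Nat.Partition.restricted]
  rw [h2, ← h1]
  exact h

lemma tendsto_coeff_boundedGenFun (d : ℕ) :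
    Tendsto (fun m ↦ coeff d (boundedGenFun m)) atTop (𝓝 (p d)) := by
  have h := hasProd_geomSeries.tendsto_prod_nat
  rw [PowerSeries.WithPiTopology.tendsto_iff_coeff_tendsto] at h
  simpa [boundedGenFun] using h d

lemma coeff_boundedGenFun_nonneg (m d : ℕ) : 0 ≤ coeff d (boundedGenFun m) := by
  induction m generalizing d with
  | zero => simp only [boundedGenFun, Finset.range_zero, Finset.prod_empty, coeff_one]; positivity
  | succ m ih =>
    rw [boundedGenFun, Finset.prod_range_succ, coeff_mul]
    refine Finset.sum_nonneg fun x _ ↦ mul_nonneg (ih _) ?_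
    simp only [geomSeries, coeff_mk]
    positivity

lemma coeff_boundedGenFun_mono (d : ℕ) : Monotone fun m ↦ coeff d (boundedGenFun m) := by
  refine monotone_nat_of_le_succ fun m ↦ ?_
  rw [boundedGenFun, boundedGenFun, Finset.prod_range_succ, ← boundedGenFun, coeff_mul]
  have h : coeff d (boundedGenFun m) =
      coeff (d, 0).1 (boundedGenFun m) * coeff (d, 0).2 (geomSeries (m + 1)) := by
    simp [geomSeries]
  rw [h]
  refine Finset.single_le_sum (f := fun x : ℕ × ℕ ↦
    coeff x.1 (boundedGenFun m) * coeff x.2 (geomSeries (m + 1))) (fun x _ ↦ ?_) (by simp)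
  refine mul_nonneg (coeff_boundedGenFun_nonneg _ _) ?_
  simp only [geomSeries, coeff_mk]
  positivity

lemma coeff_boundedGenFun_le (m d : ℕ) : coeff d (boundedGenFun m) ≤ p d :=
  (coeff_boundedGenFun_mono d).ge_of_tendsto (tendsto_coeff_boundedGenFun d) m

/-- `f` converges absolutely at `z`, with value `v`. -/
def EvalsTo (f : ℝ⟦X⟧) (z v : ℂ) : Prop :=
  (Summable fun n ↦ ‖((coeff n f : ℝ) : ℂ) * z ^ n‖) ∧ ∑' n, ((coeff n f : ℝ) : ℂ) * z ^ n = v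

lemma EvalsTo.mul {f g : ℝ⟦X⟧} {z v w : ℂ} (hf : EvalsTo f z v) (hg : EvalsTo g z w) :
    EvalsTo (f * g) z (v * w) := by
  have key : ∀ n, ((coeff n (f * g) : ℝ) : ℂ) * z ^ n = ∑ kl ∈ Finset.HasAntidiagonal.antidiagonal n,
      (((coeff kl.1 f : ℝ) : ℂ) * z ^ kl.1) * (((coeff kl.2 g : ℝ) : ℂ) * z ^ kl.2) := by
    intro n
    rw [coeff_mul]
    push_cast
    rw [Finset.sum_mul]
    refine Finset.sum_congr rfl fun x hx ↦ ?_
    rw [← Finset.HasAntidiagonal.mem_antidiagonal.mp hx, pow_add]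
    ring
  have h1 := summable_norm_sum_mul_antidiagonal_of_summable_norm hf.1 hg.1
  have h2 := tsum_mul_tsum_eq_tsum_sum_antidiagonal_of_summable_norm hf.1 hg.1
  refine ⟨h1.congr fun n ↦ congrArg norm (key n).symm, ?_⟩
  rw [← hf.2, ← hg.2, h2]
  exact tsum_congr key

lemma evalsTo_geomSeries (k : ℕ) {z : ℂ} (hz : ‖z‖ < 1) :
    EvalsTo (geomSeries (k + 1)) z (1 - z ^ (k + 1))⁻¹ := by
  have hinj : Function.Injective fun j : ℕ ↦ (k + 1) * j :=
    fun a b h ↦ Nat.eq_of_mul_eq_mul_left (Nat.succ_pos k) h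
  have hzero : ∀ x ∉ Set.range (fun j : ℕ ↦ (k + 1) * j),
      ((coeff x (geomSeries (k + 1)) : ℝ) : ℂ) * z ^ x = 0 := by
    intro x hx
    have : ¬ (k + 1) ∣ x := fun ⟨c, hc⟩ ↦ hx ⟨c, hc.symm⟩
    simp [geomSeries, this]
  have hk : ‖z ^ (k + 1)‖ < 1 := by
    rw [norm_pow]
    exact pow_lt_one₀ (norm_nonneg _) hz (by simp)
  have hcomp : ((fun n ↦ ((coeff n (geomSeries (k + 1)) : ℝ) : ℂ) * z ^ n) ∘
      fun j : ℕ ↦ (k + 1) * j) = fun j ↦ (z ^ (k + 1)) ^ j := by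
    ext j
    simp [geomSeries, pow_mul]
  constructor
  · rw [← hinj.summable_iff (fun x hx ↦ by rw [hzero x hx, norm_zero])]
    refine (summable_geometric_of_lt_one (norm_nonneg _) hk).congr fun j ↦ ?_
    have := congrFun hcomp j
    simp only [Function.comp_apply] at this ⊢
    rw [this, norm_pow (z ^ (k + 1))]
  · refine HasSum.tsum_eq ?_
    rw [← hinj.hasSum_iff hzero, hcomp]
    exact hasSum_geometric_of_norm_lt_one hk

lemma evalsTo_boundedGenFun (m : ℕ) {z : ℂ} (hz : ‖z‖ < 1) :
    EvalsTo (boundedGenFun m) z (∏ i ∈ Finset.range m, (1 - z ^ (i + 1)))⁻¹ := by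
  induction m with
  | zero =>
    have h : ∀ n ≠ 0, ((coeff n (boundedGenFun 0) : ℝ) : ℂ) * z ^ n = 0 := by
      intro n hn
      simp [boundedGenFun, coeff_one, hn]
    constructor
    · refine summable_of_ne_finset_zero (s := {0}) fun n hn ↦ ?_
      rw [h n (by simpa using hn), norm_zero]
    · rw [tsum_eq_single 0 h]
      simp [boundedGenFun]
  | succ m ih =>
    have := ih.mul (evalsTo_geomSeries m hz)
    rw [boundedGenFun, Finset.prod_range_succ, ← boundedGenFun, Finset.prod_range_succ, mul_inv]
    exact this

lemma one_sub_pow_ne_zero {q : ℂ} (hq : ‖q‖ < 1) (n : ℕ) : 1 - q ^ (n + 1) ≠ 0 := by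
  intro h
  have h1 : ‖q ^ (n + 1)‖ = 1 := by rw [← sub_eq_zero.mp h, norm_one]
  rw [norm_pow] at h1
  exact (pow_lt_one₀ (norm_nonneg q) hq (Nat.succ_ne_zero n)).ne h1

lemma eulerProd_ne_zero {q : ℂ} (hq : ‖q‖ < 1) : eulerProd q ≠ 0 := by
  have := tprod_one_add_ne_zero_of_summable (f := fun n : ℕ ↦ -q ^ (n + 1))
    (fun n ↦ by simpa [← sub_eq_add_neg] using one_sub_pow_ne_zero hq n)
    (by simpa using (summable_nat_add_iff 1).mpr (summable_geometric_of_lt_one (norm_nonneg _) hq))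
  simpa [eulerProd, sub_eq_add_neg] using this

lemma tendsto_eulerProd {q : ℂ} (hq : ‖q‖ < 1) :
    Tendsto (fun m ↦ ∏ i ∈ Finset.range m, (1 - q ^ (i + 1))) atTop (𝓝 (eulerProd q)) :=
  (ModularForm.multipliable_one_sub_pow hq).hasProd.tendsto_prod_nat

lemma summable_p_mul_pow {r : ℝ} (hr0 : 0 ≤ r) (hr : r < 1) : Summable fun n ↦ p n * r ^ n := by
  have hn : ‖(r : ℂ)‖ < 1 := by simpa [abs_of_nonneg hr0] using hr
  have hlim := ((tendsto_eulerProd hn).inv₀ (eulerProd_ne_zero hn)).norm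
  refine summable_of_sum_range_le (c := ‖(eulerProd r)⁻¹‖)
    (fun n ↦ mul_nonneg (p_nonneg n) (by positivity)) fun N ↦ ?_
  have hleft : Tendsto (fun m ↦ ∑ d ∈ Finset.range N, coeff d (boundedGenFun m) * r ^ d) atTop
      (𝓝 (∑ d ∈ Finset.range N, p d * r ^ d)) :=
    tendsto_finsetSum _ fun d _ ↦ (tendsto_coeff_boundedGenFun d).mul_const _
  refine le_of_tendsto_of_tendsto' hleft hlim fun m ↦ ?_
  obtain ⟨hs, hv⟩ := evalsTo_boundedGenFun m hn
  rw [← hv]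
  have heq : ∀ n, ‖((coeff n (boundedGenFun m) : ℝ) : ℂ) * (r : ℂ) ^ n‖ =
      coeff n (boundedGenFun m) * r ^ n := by
    intro n
    rw [norm_mul, norm_pow, norm_real, norm_real, Real.norm_of_nonneg hr0,
      Real.norm_of_nonneg (coeff_boundedGenFun_nonneg _ _)]
  have hcast : ∑' n, ((coeff n (boundedGenFun m) : ℝ) : ℂ) * (r : ℂ) ^ n =
      ((∑' n, coeff n (boundedGenFun m) * r ^ n : ℝ) : ℂ) := by
    rw [ofReal_tsum]
    exact tsum_congr fun n ↦ by push_cast; rfl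
  rw [hcast, norm_real]
  refine le_trans ?_ (Real.le_norm_self _)
  simp_rw [heq] at hs
  exact hs.sum_le_tsum _ fun n _ ↦
    mul_nonneg (coeff_boundedGenFun_nonneg _ _) (by positivity)

lemma summable_norm_p_mul_pow {q : ℂ} (hq : ‖q‖ < 1) :
    Summable fun n ↦ ‖(p n : ℂ) * q ^ n‖ := by
  refine (summable_p_mul_pow (norm_nonneg q) hq).congr fun n ↦ ?_
  rw [norm_mul, norm_pow, norm_real, Real.norm_of_nonneg (p_nonneg n)]

lemma hasSum_p_mul_pow {q : ℂ} (hq : ‖q‖ < 1) :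
    HasSum (fun n ↦ (p n : ℂ) * q ^ n) (eulerProd q)⁻¹ := by
  have hsum := summable_p_mul_pow (norm_nonneg q) hq
  have h := tendsto_tsum_of_dominated_convergence (𝓕 := atTop)
    (f := fun m d ↦ ((coeff d (boundedGenFun m) : ℝ) : ℂ) * q ^ d)
    (g := fun d ↦ (p d : ℂ) * q ^ d) (bound := fun d ↦ p d * ‖q‖ ^ d) hsum
    (fun d ↦ ((continuous_ofReal.tendsto _).comp (tendsto_coeff_boundedGenFun d)).mul_const _)
    (Eventually.of_forall fun m d ↦ by
      rw [norm_mul, norm_pow, norm_real, Real.norm_of_nonneg (coeff_boundedGenFun_nonneg _ _)]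
      exact mul_le_mul_of_nonneg_right (coeff_boundedGenFun_le m d) (by positivity))
  have h2 : (fun m ↦ ∑' d, ((coeff d (boundedGenFun m) : ℝ) : ℂ) * q ^ d) =
      fun m ↦ (∏ i ∈ Finset.range m, (1 - q ^ (i + 1)))⁻¹ :=
    funext fun m ↦ (evalsTo_boundedGenFun m hq).2
  rw [h2] at h
  have h3 := tendsto_nhds_unique h ((tendsto_eulerProd hq).inv₀ (eulerProd_ne_zero hq))
  rw [← h3]
  exact (summable_norm_p_mul_pow hq).of_norm.hasSum

/-- The generating function is close to `1` near the origin. -/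
lemma norm_inv_eulerProd_sub_one_le {q : ℂ} (hq : ‖q‖ ≤ 1 / 4) :
    ‖(eulerProd q)⁻¹ - 1‖ ≤ 4 * ‖q‖ := by
  have hq1 : ‖q‖ < 1 := by linarith
  have h := (hasSum_nat_add_iff' 1).mpr (hasSum_p_mul_pow hq1)
  simp only [Finset.range_one, Finset.sum_singleton, p_zero, pow_zero, ofReal_one, mul_one] at h
  have hg : HasSum (fun n : ℕ ↦ 2 * ‖q‖ * (2 * ‖q‖) ^ n) (2 * ‖q‖ * (1 - 2 * ‖q‖)⁻¹) :=
    (hasSum_geometric_of_lt_one (by positivity) (by linarith)).mul_left _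
  rw [← h.tsum_eq]
  refine (tsum_of_norm_bounded hg fun n ↦ ?_).trans ?_
  · rw [norm_mul, norm_pow, norm_real, Real.norm_of_nonneg (p_nonneg _)]
    calc p (n + 1) * ‖q‖ ^ (n + 1) ≤ 2 ^ (n + 1) * ‖q‖ ^ (n + 1) := by
          gcongr; exact p_le_two_pow _
      _ = 2 * ‖q‖ * (2 * ‖q‖) ^ n := by ring
  · rw [← div_eq_mul_inv, div_le_iff₀ (by linarith)]
    nlinarith [norm_nonneg q]
end GeneratingFunction

end PartitionAsymptotics

namespace PartitionAsymptotics

open Filter Topology Complex MeasureTheory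

/-! ### Cauchy's formula and the modular transformation -/

lemma integral_cexp_two_pi_int (k : ℤ) :
    ∫ t in (-(1 / 2) : ℝ)..(1 / 2), Complex.exp (2 * π * I * k * t) = if k = 0 then 1 else 0 := by
  split_ifs with hk
  · subst hk
    norm_num
  · have hc : (2 * π * I * k : ℂ) ≠ 0 := by
      simp [Real.pi_ne_zero, hk]
    rw [integral_exp_mul_complex hc]
    have : Complex.exp (2 * π * I * k * ((1 / 2 : ℝ) : ℂ)) =
        Complex.exp (2 * π * I * k * ((-(1 / 2) : ℝ) : ℂ)) := by
      rw [Complex.exp_eq_exp_iff_exists_int]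
      exact ⟨k, by push_cast; ring⟩
    rw [this, sub_self, zero_div]

lemma norm_cexp_neg_two_pi_mul (s : ℂ) :
    ‖Complex.exp (-(2 * π * s))‖ = Real.exp (-(2 * π * s.re)) := by
  rw [Complex.norm_exp]
  congr 1
  simp

lemma norm_cexp_neg_two_pi_mul_lt_one {s : ℂ} (hs : 0 < s.re) :
    ‖Complex.exp (-(2 * π * s))‖ < 1 := by
  rw [norm_cexp_neg_two_pi_mul, Real.exp_lt_one_iff]
  have := mul_pos Real.two_pi_pos hs
  linarith

lemma p_eq_integral (n : ℕ) {y : ℝ} (hy : 0 < y) :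
    (p n : ℂ) = ∫ t in (-(1 / 2) : ℝ)..(1 / 2),
      (eulerProd (Complex.exp (-(2 * π * (y + t * I)))))⁻¹ *
        Complex.exp (2 * π * n * (y + t * I)) := by
  have hre : ∀ t : ℝ, ((y : ℂ) + t * I).re = y := by intro t; simp
  have hlt : ∀ t : ℝ, ‖Complex.exp (-(2 * π * (y + t * I)))‖ < 1 := fun t ↦
    norm_cexp_neg_two_pi_mul_lt_one (by rw [hre]; exact hy)
  have hr1 : Real.exp (-(2 * π * y)) < 1 := by
    have := hlt 0
    rwa [norm_cexp_neg_two_pi_mul, hre] at this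
  have hn : ∀ t : ℝ, ‖Complex.exp (2 * π * n * (y + t * I))‖ = Real.exp (2 * π * n * y) := by
    intro t
    rw [Complex.norm_exp]
    congr 1
    have : (2 * π * n * (y + t * I) : ℂ) = ((2 * π * n : ℝ) : ℂ) * (y + t * I) := by push_cast; ring
    rw [this, re_ofReal_mul, hre]
  have h := intervalIntegral.hasSum_integral_of_dominated_convergence
    (μ := volume) (a := -(1 / 2)) (b := 1 / 2)
    (F := fun (m : ℕ) (t : ℝ) ↦ (p m : ℂ) * Complex.exp (-(2 * π * (y + t * I))) ^ m *
      Complex.exp (2 * π * n * (y + t * I)))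
    (f := fun t : ℝ ↦ (eulerProd (Complex.exp (-(2 * π * (y + t * I)))))⁻¹ *
        Complex.exp (2 * π * n * (y + t * I)))
    (fun m _ ↦ p m * Real.exp (-(2 * π * y)) ^ m * Real.exp (2 * π * n * y))
    (fun m ↦ (by fun_prop : Continuous _).aestronglyMeasurable)
    (fun m ↦ Eventually.of_forall fun t _ ↦ by
      rw [norm_mul, norm_mul, norm_pow, hn, norm_cexp_neg_two_pi_mul, hre, norm_real,
        Real.norm_of_nonneg (p_nonneg m)])
    (Eventually.of_forall fun t _ ↦
      (summable_p_mul_pow (Real.exp_pos _).le hr1).mul_right _)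
    intervalIntegrable_const
    (Eventually.of_forall fun t _ ↦ (hasSum_p_mul_pow (hlt t)).mul_right _)
  refine (h.unique ?_).symm
  have hterm : ∀ m : ℕ, ∫ t in (-(1 / 2) : ℝ)..(1 / 2),
      (p m : ℂ) * Complex.exp (-(2 * π * (y + t * I))) ^ m * Complex.exp (2 * π * n * (y + t * I)) =
      if m = n then (p n : ℂ) else 0 := by
    intro m
    have hfun : ∀ t : ℝ, (p m : ℂ) * Complex.exp (-(2 * π * (y + t * I))) ^ m *
        Complex.exp (2 * π * n * (y + t * I)) =
        (p m * Complex.exp (2 * π * (n - m) * y)) *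
          Complex.exp (2 * π * I * ((n - m : ℤ) : ℂ) * t) := by
      intro t
      rw [← Complex.exp_nat_mul, mul_assoc (p m : ℂ), ← Complex.exp_add, mul_assoc (p m : ℂ),
        ← Complex.exp_add]
      congr 2
      push_cast
      ring
    simp_rw [hfun]
    rw [intervalIntegral.integral_const_mul, integral_cexp_two_pi_int]
    by_cases hm : m = n
    · subst hm
      simp
    · rw [if_neg hm, if_neg (by omega), mul_zero]
  simp_rw [hterm]
  exact hasSum_ite_eq n _

lemma sqrt_I_mul {s : ℂ} (hs : 0 < s.re) :
    Complex.sqrt (I * s) = Complex.sqrt I * Complex.sqrt s := by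
  have hs0 : s ≠ 0 := by rintro rfl; simp at hs
  have harg := abs_lt.mp (Complex.abs_arg_lt_pi_div_two_iff.mpr (Or.inl hs))
  rw [sqrt_eq_exp (mul_ne_zero I_ne_zero hs0), sqrt_eq_exp I_ne_zero, sqrt_eq_exp hs0,
    Complex.log_mul I_ne_zero hs0, ← Complex.exp_add]
  · congr 1; ring
  · rw [arg_I]
    constructor <;> linarith [Real.pi_pos, harg.1, harg.2]

/-- The behaviour of the generating function under `s ↦ 1 / s`. -/
lemma inv_eulerProd_eq {s : ℂ} (hs : 0 < s.re) :
    (eulerProd (Complex.exp (-(2 * π * s))))⁻¹ =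
      Complex.sqrt s * Complex.exp (π / 12 * (1 / s) - π / 12 * s) *
        (eulerProd (Complex.exp (-(2 * π * (1 / s)))))⁻¹ := by
  have hs0 : s ≠ 0 := by rintro rfl; simp at hs
  have hs' : 0 < (1 / s).re := by
    rw [one_div, inv_re]
    exact div_pos hs (normSq_pos.mpr hs0)
  have heta : ∀ w : ℂ, ModularForm.eta (I * w) =
      Complex.exp (-(π / 12 * w)) * eulerProd (Complex.exp (-(2 * π * w))) := by
    intro w
    rw [ModularForm.eta, eulerProd]
    congr 1
    · rw [Function.Periodic.qParam]
      congr 1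
      push_cast
      linear_combination (2 * π * w / 24) * I_sq
    · refine tprod_congr fun k ↦ ?_
      rw [ModularForm.eta_q_eq_pow]
      congr 3
      linear_combination (2 * π * w) * I_sq
  have hmem : I * s ∈ UpperHalfPlane.upperHalfPlaneSet := by
    simpa [UpperHalfPlane.upperHalfPlaneSet] using hs
  have h := ModularForm.eta_comp_eq_csqrt_I_inv hmem
  have hinv : -1 / (I * s) = I * (1 / s) := by
    field_simp
    rw [I_sq]
  simp only [Function.comp_apply, hinv, Pi.smul_apply, Pi.mul_apply, smul_eq_mul, sqrt_I_mul hs,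
    heta] at h
  have hI : Complex.sqrt I ≠ 0 := by
    rw [sqrt_eq_exp I_ne_zero]
    exact Complex.exp_ne_zero _
  have h1 := eulerProd_ne_zero (norm_cexp_neg_two_pi_mul_lt_one hs)
  have h2 := eulerProd_ne_zero (norm_cexp_neg_two_pi_mul_lt_one hs')
  have h3 : Complex.exp (-(π / 12 * (1 / s))) * eulerProd (Complex.exp (-(2 * π * (1 / s)))) =
      Complex.sqrt s * Complex.exp (-(π / 12 * s)) * eulerProd (Complex.exp (-(2 * π * s))) := by
    rw [h]
    field_simp
  rw [← div_eq_mul_inv, eq_div_iff h2, inv_mul_eq_iff_eq_mul₀ h1]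
  have h4 : Complex.exp (π / 12 * (1 / s) - π / 12 * s) =
      Complex.exp (-(π / 12 * s)) * Complex.exp (π / 12 * (1 / s)) := by
    rw [← Complex.exp_add]; congr 1; ring
  have h5 : Complex.exp (-(π / 12 * (1 / s))) * Complex.exp (π / 12 * (1 / s)) = 1 := by
    rw [← Complex.exp_add]; simp
  rw [h4]
  linear_combination Complex.exp (π / 12 * (1 / s)) * h3 -
    eulerProd (Complex.exp (-(2 * π * (1 / s)))) * h5

end PartitionAsymptotics

namespace PartitionAsymptotics

open Filter Topology Complex MeasureTheory

/-! ### The generating function away from the positive real axis -/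

lemma neg_log_norm_one_sub_le {w : ℂ} (hw : ‖w‖ < 1) :
    -Real.log ‖1 - w‖ - w.re ≤ -Real.log (1 - ‖w‖) - ‖w‖ := by
  have h1 := hasSum_re (hasSum_taylorSeries_neg_log hw)
  have hw' : ‖((‖w‖ : ℝ) : ℂ)‖ < 1 := by simpa using hw
  have h2 := hasSum_re (hasSum_taylorSeries_neg_log hw')
  have h3 := h1.sub (hasSum_ite_eq 1 w.re)
  have h4 := h2.sub (hasSum_ite_eq 1 ‖w‖)
  have hv1 : (-Complex.log (1 - w)).re = -Real.log ‖1 - w‖ := by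
    rw [neg_re, log_re]
  have hv2 : (-Complex.log (1 - ((‖w‖ : ℝ) : ℂ))).re = -Real.log (1 - ‖w‖) := by
    rw [neg_re, log_re, ← ofReal_one, ← ofReal_sub, norm_real,
      Real.norm_of_nonneg (by linarith)]
  rw [hv1] at h3
  rw [hv2] at h4
  refine hasSum_le (fun n ↦ ?_) h3 h4
  by_cases hn : n = 1
  · subst hn
    simp
  · simp only [hn, if_false, sub_zero]
    have hc : ((‖w‖ : ℝ) : ℂ) ^ n / (n : ℂ) = ((‖w‖ ^ n / n : ℝ) : ℂ) := by push_cast; rfl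
    rw [hc, ofReal_re]
    refine (re_le_norm _).trans ?_
    rw [norm_div, norm_pow, Complex.norm_natCast]

lemma norm_inv_one_sub_le {w : ℂ} (hw : ‖w‖ < 1) :
    ‖(1 - w)⁻¹‖ ≤ ‖(1 - ((‖w‖ : ℝ) : ℂ))⁻¹‖ * Real.exp (w.re - ‖w‖) := by
  have h := neg_log_norm_one_sub_le hw
  have hpos : 0 < 1 - ‖w‖ := by linarith
  have hpos2 : 0 < ‖1 - w‖ := by
    have := norm_sub_norm_le 1 w
    rw [norm_one] at this
    linarith
  rw [← ofReal_one, ← ofReal_sub, norm_inv, norm_inv, norm_real, Real.norm_of_nonneg hpos.le,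
    ofReal_one, ← Real.exp_log hpos2, ← Real.exp_neg]
  nth_rw 1 [← Real.exp_log hpos]
  rw [← Real.exp_neg, ← Real.exp_add, Real.exp_le_exp]
  linarith

lemma norm_inv_eulerProd_le {q : ℂ} (hq : ‖q‖ < 1) :
    ‖(eulerProd q)⁻¹‖ ≤ ‖(eulerProd ((‖q‖ : ℝ) : ℂ))⁻¹‖ *
      Real.exp (-(‖q‖ / (1 - ‖q‖) - ‖q‖ / ‖1 - q‖)) := by
  have hq' : ‖((‖q‖ : ℝ) : ℂ)‖ < 1 := by simpa using hq
  have hA := ((tendsto_eulerProd hq).inv₀ (eulerProd_ne_zero hq)).norm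
  have hB := ((tendsto_eulerProd hq').inv₀ (eulerProd_ne_zero hq')).norm
  have hC1 : Tendsto (fun m ↦ ∑ i ∈ Finset.range m, (q ^ (i + 1)).re) atTop
      (𝓝 (q * (1 - q)⁻¹).re) := by
    have := hasSum_re ((hasSum_geometric_of_norm_lt_one hq).mul_left q)
    simpa [pow_succ'] using this.tendsto_sum_nat
  have hC2 : Tendsto (fun m ↦ ∑ i ∈ Finset.range m, ‖q‖ ^ (i + 1)) atTop
      (𝓝 (‖q‖ * (1 - ‖q‖)⁻¹)) := by
    have := (hasSum_geometric_of_lt_one (norm_nonneg q) hq).mul_left ‖q‖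
    simpa [pow_succ'] using this.tendsto_sum_nat
  have hlim := hB.mul ((Real.continuous_exp.tendsto _).comp (hC1.sub hC2))
  have hle := le_of_tendsto_of_tendsto' hA hlim fun m ↦ by
    simp only [Function.comp_apply]
    rw [← Finset.sum_sub_distrib, Real.exp_sum, norm_inv, norm_inv, norm_prod, norm_prod,
      ← Finset.prod_inv_distrib, ← Finset.prod_inv_distrib, ← Finset.prod_mul_distrib]
    refine Finset.prod_le_prod (fun i _ ↦ by positivity) fun i _ ↦ ?_
    have hi : ‖q ^ (i + 1)‖ < 1 := by
      rw [norm_pow]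
      exact pow_lt_one₀ (norm_nonneg _) hq (Nat.succ_ne_zero i)
    have := norm_inv_one_sub_le hi
    rw [norm_pow, norm_inv, norm_inv] at this
    simpa using this
  refine hle.trans (mul_le_mul_of_nonneg_left (Real.exp_le_exp.mpr ?_) (norm_nonneg _))
  have : (q * (1 - q)⁻¹).re ≤ ‖q‖ / ‖1 - q‖ := by
    refine (re_le_norm _).trans ?_
    rw [norm_mul, norm_inv, div_eq_mul_inv]
  rw [← div_eq_mul_inv ‖q‖]
  linarith

lemma sq_norm_one_sub_cexp (y t : ℝ) :
    ‖1 - Complex.exp (-(2 * π * (y + t * I)))‖ ^ 2 =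
      (1 - Real.exp (-(2 * π * y))) ^ 2 + 4 * Real.exp (-(2 * π * y)) * Real.sin (π * t) ^ 2 := by
  have h : Complex.exp (-(2 * π * (y + t * I))) =
      Complex.exp (((-(2 * π * y) : ℝ) : ℂ) + ((-(2 * (π * t)) : ℝ) : ℂ) * I) := by
    congr 1; push_cast; ring
  rw [h, Complex.sq_norm, normSq_apply, sub_re, sub_im, exp_re, exp_im]
  simp only [add_re, add_im, ofReal_re, ofReal_im, mul_re, mul_im, I_re, I_im, mul_zero, mul_one,
    sub_zero, zero_add, add_zero, one_re, one_im, Real.cos_neg, Real.sin_neg, Real.cos_two_mul,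
    Real.sin_two_mul]
  have := Real.sin_sq_add_cos_sq (π * t)
  have h2 : Real.cos (π * t) ^ 2 = 1 - Real.sin (π * t) ^ 2 := by linarith
  ring_nf
  rw [show Real.cos (π * t) ^ 4 = (Real.cos (π * t) ^ 2) ^ 2 by ring, h2]
  ring

/-- The exponential saving on the minor arcs. -/
lemma minor_arc_saving {κ y t : ℝ} (hκ : 58 ≤ κ) (hy : y = π / (12 * κ)) (ht : 6 * y ≤ |t|)
    (ht' : |t| ≤ 1 / 2) :
    0.43 * κ ≤ Real.exp (-(2 * π * y)) / (1 - Real.exp (-(2 * π * y))) -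
      Real.exp (-(2 * π * y)) / ‖1 - Complex.exp (-(2 * π * (y + t * I)))‖ := by
  have hpi3 := Real.pi_gt_d4
  have hpi4 := Real.pi_lt_d4
  have hpisq : π ^ 2 < 9.87 := by nlinarith
  have hκ0 : 0 < κ := by linarith
  have hy0 : 0 < y := by rw [hy]; positivity
  set x := 2 * π * y with hx
  have hx0 : 0 < x := by positivity
  have hxκ : x * (6 * κ) = π ^ 2 := by
    rw [hx, hy]; field_simp; ring
  have hx1 : x ≤ 0.0287 := by nlinarith
  set r := Real.exp (-x) with hr
  have hr0 : 0 < r := Real.exp_pos _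
  have hr1 : 1 - x ≤ r := by linarith [Real.add_one_le_exp (-x)]
  have hr2 : r < 1 := Real.exp_lt_one_iff.mpr (by linarith)
  have hsin : (2 * |t|) ^ 2 ≤ Real.sin (π * t) ^ 2 := by
    have h1 : 2 / π * (π * |t|) ≤ Real.sin (π * |t|) :=
      Real.mul_le_sin (by positivity) (by nlinarith)
    have h2 : 2 / π * (π * |t|) = 2 * |t| := by field_simp
    rw [h2] at h1
    have h3 : Real.sin (π * |t|) ^ 2 = Real.sin (π * t) ^ 2 := by
      rcases abs_choice t with h | h <;> rw [h]
      rw [mul_neg, Real.sin_neg, neg_sq]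
    rw [← h3]
    exact pow_le_pow_left₀ (by positivity) h1 2
  have hnorm := sq_norm_one_sub_cexp y t
  rw [← hx, ← hr] at hnorm
  set d := ‖1 - Complex.exp (-(2 * π * (y + t * I)))‖ with hd
  have hyx : x ^ 2 ≤ 39.48 * y ^ 2 := by
    rw [hx]; nlinarith [sq_nonneg y]
  have hty : 36 * y ^ 2 ≤ |t| ^ 2 := by nlinarith
  have h1r : (1 - r) ^ 2 ≤ x ^ 2 := by nlinarith
  have hA : 4 * (4 * (36 * y ^ 2)) ≤ 4 * Real.sin (π * t) ^ 2 := by nlinarith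
  have hB : r * (4 * (4 * (36 * y ^ 2))) ≤ r * (4 * Real.sin (π * t) ^ 2) :=
    mul_le_mul_of_nonneg_left hA hr0.le
  have hC : 0.97 * (576 * y ^ 2) ≤ r * (576 * y ^ 2) :=
    mul_le_mul_of_nonneg_right (by linarith) (by positivity)
  have hd2 : (3.88 * (1 - r)) ^ 2 ≤ d ^ 2 := by
    rw [hnorm]; nlinarith
  have hd3 : 3.88 * (1 - r) ≤ d := le_of_sq_le_sq hd2 (norm_nonneg _)
  have hrr : 0 < 1 - r := by linarith
  have h5 : r / d ≤ r / (3.88 * (1 - r)) := by gcongr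
  have h6 : r / (3.88 * (1 - r)) = r / (1 - r) / 3.88 := by field_simp
  have h7 : (1 - x) / x ≤ r / (1 - r) := by
    rw [div_le_div_iff₀ hx0 hrr]
    nlinarith
  have h8 : 0.6079 * κ - 1 ≤ (1 - x) / x := by
    rw [le_div_iff₀ hx0]
    nlinarith
  have h9 : r / (1 - r) / 3.88 ≤ r / (1 - r) * 0.258 := by
    rw [div_eq_mul_inv (r / (1 - r))]
    refine mul_le_mul_of_nonneg_left (by norm_num) (by positivity)
  linarith

end PartitionAsymptotics

namespace PartitionAsymptotics

open Filter Topology Complex MeasureTheory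

section GaussianPrimitive

lemma exists_primitive_exp_sq :
    ∃ E : ℂ → ℂ, E 0 = 0 ∧ ∀ z, HasDerivAt E (Complex.exp (z ^ 2)) z := by
  have hd : Differentiable ℂ fun z : ℂ ↦ Complex.exp (z ^ 2) := by fun_prop
  obtain ⟨E, h0, hE⟩ := hd.isExactOn_univ.with_val_at 0 0
  exact ⟨E, h0, fun z ↦ hE z trivial⟩

lemma integral_Ioi_exp_neg_sq_le {b : ℝ} (hb : 1 ≤ b) :
    ∫ t in Set.Ioi b, Real.exp (-t ^ 2) ≤ Real.exp (-b ^ 2) := by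
  have hderiv : ∀ x ∈ Set.Ici b,
      HasDerivAt (fun t ↦ -(1 / 2) * Real.exp (-t ^ 2)) (x * Real.exp (-x ^ 2)) x := by
    intro x _
    have h := (((hasDerivAt_pow 2 x).neg).exp).const_mul (-(1 / 2) : ℝ)
    refine h.congr_deriv ?_
    simp only [Pi.neg_apply]
    push_cast
    ring
  have hlim : Tendsto (fun t : ℝ ↦ -(1 / 2) * Real.exp (-t ^ 2)) atTop (𝓝 0) := by
    have h : Tendsto (fun t : ℝ ↦ -t ^ 2) atTop atBot :=
      tendsto_neg_atTop_atBot.comp (tendsto_pow_atTop two_ne_zero)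
    simpa using (Real.tendsto_exp_atBot.comp h).const_mul (-(1 / 2) : ℝ)
  have hpos : ∀ x ∈ Set.Ioi b, 0 ≤ x * Real.exp (-x ^ 2) := fun x hx ↦
    mul_nonneg (by linarith [Set.mem_Ioi.mp hx]) (Real.exp_pos _).le
  have hint := integrableOn_Ioi_deriv_of_nonneg' hderiv hpos hlim
  have hval := integral_Ioi_of_hasDerivAt_of_nonneg' hderiv hpos hlim
  have hg : Integrable fun t : ℝ ↦ Real.exp (-t ^ 2) := by
    simpa using integrable_exp_neg_mul_sq (b := 1) one_pos
  calc ∫ t in Set.Ioi b, Real.exp (-t ^ 2)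
      ≤ ∫ t in Set.Ioi b, t * Real.exp (-t ^ 2) :=
        setIntegral_mono_on hg.integrableOn hint measurableSet_Ioi fun x hx ↦ by
          nlinarith [Real.exp_pos (-x ^ 2), Set.mem_Ioi.mp hx]
    _ ≤ Real.exp (-b ^ 2) := by rw [hval]; linarith [Real.exp_pos (-b ^ 2)]

lemma abs_integral_exp_neg_sq_sub_le {b : ℝ} (hb : 1 ≤ b) :
    |(∫ t in (0 : ℝ)..b, Real.exp (-t ^ 2)) - √π / 2| ≤ Real.exp (-b ^ 2) := by
  have hg : Integrable fun t : ℝ ↦ Real.exp (-t ^ 2) := by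
    simpa using integrable_exp_neg_mul_sq (b := 1) one_pos
  have h1 : ∫ t in Set.Ioi (0 : ℝ), Real.exp (-t ^ 2) = √π / 2 := by
    simpa using integral_gaussian_Ioi 1
  have h2 := intervalIntegral.integral_Ioi_sub_Ioi (f := fun t : ℝ ↦ Real.exp (-t ^ 2)) (μ := volume)
    (a := 0) (b := b) hg.integrableOn (by linarith)
  have h3 : 0 ≤ ∫ t in Set.Ioi b, Real.exp (-t ^ 2) :=
    integral_nonneg fun t ↦ (Real.exp_pos _).le
  have h4 := integral_Ioi_exp_neg_sq_le hb
  rw [← h2, h1, abs_le]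
  constructor <;> linarith

variable {E : ℂ → ℂ}

lemma primitive_exp_sq_mul_I (h0 : E 0 = 0) (hE : ∀ z, HasDerivAt E (Complex.exp (z ^ 2)) z)
    (b : ℝ) : E (b * I) = ((∫ t in (0 : ℝ)..b, Real.exp (-t ^ 2) : ℝ) : ℂ) * I := by
  have hd : ∀ x ∈ Set.uIcc 0 b, HasDerivAt (fun t : ℝ ↦ E (t * I))
      ((Real.exp (-x ^ 2) : ℝ) * I) x := by
    intro x _
    have h1 : HasDerivAt (fun t : ℂ ↦ t * I) I x := by simpa using (hasDerivAt_id (x : ℂ)).mul_const I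
    have h2 := (HasDerivAt.comp (x : ℂ) (hE ((x : ℂ) * I)) h1).comp_ofReal
    refine h2.congr_deriv ?_
    rw [mul_pow, I_sq]
    push_cast
    ring_nf
  have := intervalIntegral.integral_eq_sub_of_hasDerivAt hd
    (Continuous.intervalIntegrable (by fun_prop) _ _)
  rw [intervalIntegral.integral_mul_const, intervalIntegral.integral_ofReal] at this
  rw [this]
  simp [h0]

lemma primitive_exp_sq_neg (h0 : E 0 = 0) (hE : ∀ z, HasDerivAt E (Complex.exp (z ^ 2)) z)
    (z : ℂ) : E (-z) = -E z := by
  have hd : ∀ x, HasDerivAt (fun x ↦ E x + E (-x)) 0 x := by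
    intro x
    have h1 := (hE (-x)).comp x (hasDerivAt_neg x)
    refine ((hE x).add h1).congr_deriv ?_
    rw [neg_sq]
    ring
  have := is_const_of_deriv_eq_zero (fun x ↦ (hd x).differentiableAt) (fun x ↦ (hd x).deriv) z 0
  simp only [neg_zero, h0, add_zero] at this
  exact (neg_eq_of_add_eq_zero_right this).symm

lemma norm_exp_sq (z : ℂ) : ‖Complex.exp (z ^ 2)‖ = Real.exp (z.re ^ 2 - z.im ^ 2) := by
  rw [norm_exp, sq]
  simp [sq]

lemma norm_primitive_exp_sq_sub_le (h0 : E 0 = 0)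
    (hE : ∀ z, HasDerivAt E (Complex.exp (z ^ 2)) z) {w : ℂ} (hw : 0 < w.im)
    (hw2 : w.re ^ 2 + 1 ≤ w.im ^ 2) :
    ‖E w - √π / 2 * I‖ ≤ (‖w‖ + 1) * Real.exp (w.re ^ 2 - w.im ^ 2) := by
  have hb : 1 ≤ w.im := by nlinarith [sq_nonneg w.re]
  have h1 : ‖E w - E (w.im * I)‖ ≤ Real.exp (w.re ^ 2 - w.im ^ 2) * ‖w - w.im * I‖ := by
    refine (convex_segment (𝕜 := ℝ) ((w.im : ℂ) * I) w).norm_image_sub_le_of_norm_hasDerivWithin_le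
      (fun x _ ↦ (hE x).hasDerivWithinAt) ?_ (left_mem_segment ℝ _ _) (right_mem_segment ℝ _ _)
    rintro x ⟨a, b, ha, hb, hab, rfl⟩
    rw [norm_exp_sq, Real.exp_le_exp]
    have hre : (a • ((w.im : ℂ) * I) + b • w).re = b * w.re := by simp
    have him : (a • ((w.im : ℂ) * I) + b • w).im = w.im := by
      simp only [real_smul, add_im, mul_im, ofReal_re, ofReal_im, I_re, I_im, mul_re]
      linear_combination w.im * hab
    rw [hre, him, mul_pow]
    have := mul_le_of_le_one_left (sq_nonneg w.re) (pow_le_one₀ (n := 2) hb (by linarith))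
    linarith
  have h2 : ‖w - w.im * I‖ ≤ ‖w‖ := by
    have : w - w.im * I = (w.re : ℂ) := by
      linear_combination -(re_add_im w)
    rw [this, norm_real]
    exact abs_re_le_norm w
  have h3 : ‖E (w.im * I) - √π / 2 * I‖ ≤ Real.exp (w.re ^ 2 - w.im ^ 2) := by
    have := abs_integral_exp_neg_sq_sub_le hb
    rw [primitive_exp_sq_mul_I h0 hE, ← sub_mul, norm_mul, norm_I, mul_one]
    calc _ = ‖(((∫ t in (0 : ℝ)..w.im, Real.exp (-t ^ 2)) - √π / 2 : ℝ) : ℂ)‖ := by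
          push_cast; rfl
      _ ≤ Real.exp (-w.im ^ 2) := by rw [norm_real]; exact this
      _ ≤ _ := Real.exp_le_exp.mpr (by nlinarith [sq_nonneg w.re])
  calc ‖E w - √π / 2 * I‖ = ‖(E w - E (w.im * I)) + (E (w.im * I) - √π / 2 * I)‖ := by
        congr 1; ring
    _ ≤ _ := norm_add_le _ _
    _ ≤ Real.exp (w.re ^ 2 - w.im ^ 2) * ‖w‖ + Real.exp (w.re ^ 2 - w.im ^ 2) :=
        add_le_add (h1.trans (by gcongr)) h3
    _ = _ := by ring

lemma norm_primitive_exp_sq_le (h0 : E 0 = 0) (hE : ∀ z, HasDerivAt E (Complex.exp (z ^ 2)) z)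
    {w : ℂ} (hw : w.im ^ 2 ≤ w.re ^ 2) : ‖E w‖ ≤ ‖w‖ * Real.exp (w.re ^ 2 - w.im ^ 2) := by
  have h1 : ‖E w - E 0‖ ≤ Real.exp (w.re ^ 2 - w.im ^ 2) * ‖w - 0‖ := by
    refine (convex_segment (𝕜 := ℝ) (0 : ℂ) w).norm_image_sub_le_of_norm_hasDerivWithin_le
      (fun x _ ↦ (hE x).hasDerivWithinAt) ?_ (left_mem_segment ℝ _ _) (right_mem_segment ℝ _ _)
    rintro x ⟨a, b, ha, hb, hab, rfl⟩
    rw [norm_exp_sq, Real.exp_le_exp]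
    have hre : (a • (0 : ℂ) + b • w).re = b * w.re := by simp
    have him : (a • (0 : ℂ) + b • w).im = b * w.im := by simp
    rw [hre, him, mul_pow, mul_pow, ← mul_sub]
    exact mul_le_of_le_one_left (by linarith) (pow_le_one₀ hb (by linarith))
  rw [h0, sub_zero, sub_zero] at h1
  linarith

end GaussianPrimitive

end PartitionAsymptotics

namespace PartitionAsymptotics

open Filter Topology Complex MeasureTheory

section BesselIntegral

lemma sqrt_sq' {s : ℂ} (hs : 0 < s.re) : Complex.sqrt s ^ 2 = s := by
  have hs0 : s ≠ 0 := by rintro rfl; simp at hs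
  rw [sqrt_eq_exp hs0, ← Complex.exp_nat_mul]
  push_cast
  rw [mul_div_cancel₀ _ two_ne_zero, Complex.exp_log hs0]

lemma sqrt_ne_zero' {s : ℂ} (hs : 0 < s.re) : Complex.sqrt s ≠ 0 := fun h ↦ by
  have := sqrt_sq' hs
  rw [h] at this
  rw [← this] at hs
  simp at hs

lemma re_sqrt_pos {s : ℂ} (hs : 0 < s.re) : 0 < (Complex.sqrt s).re := by
  rw [Complex.sqrt, cpow_inv_two_re]
  apply Real.sqrt_pos.mpr
  linarith [norm_nonneg s]

lemma norm_sqrt_sq {s : ℂ} (hs : 0 < s.re) : ‖Complex.sqrt s‖ ^ 2 = ‖s‖ := by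
  rw [← norm_pow, sqrt_sq' hs]

lemma hasDerivAt_sqrt' {s : ℂ} (hs : 0 < s.re) :
    HasDerivAt Complex.sqrt (1 / (2 * Complex.sqrt s)) s := by
  have hs0 : s ≠ 0 := by rintro rfl; simp at hs
  refine (Complex.hasDerivAt_sqrt (Or.inl hs)).congr_deriv ?_
  have h : s ^ (-1 / 2 : ℂ) * Complex.sqrt s = 1 := by
    rw [Complex.sqrt, ← Complex.cpow_add _ _ hs0]
    norm_num
  rw [div_eq_div_iff two_ne_zero (mul_ne_zero two_ne_zero (sqrt_ne_zero' hs))]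
  linear_combination 2 * h

variable {E : ℂ → ℂ}

/-- A primitive of `σ ↦ √σ * exp (r ^ 2 * (σ + 1 / σ))`, in terms of a primitive `E` of
`z ↦ exp (z ^ 2)`. -/
noncomputable def besselPrimitive (E : ℂ → ℂ) (r : ℝ) (σ : ℂ) : ℂ :=
  (Complex.sqrt σ * Complex.exp (r ^ 2 * (σ + 1 / σ)) +
    Complex.exp (2 * r ^ 2) * (r - 1 / (2 * r)) * E (r * (Complex.sqrt σ - 1 / Complex.sqrt σ)) -
    Complex.exp (-(2 * r ^ 2)) * (r + 1 / (2 * r)) *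
      E (r * (Complex.sqrt σ + 1 / Complex.sqrt σ))) / r ^ 2

lemma hasDerivAt_besselPrimitive (hE : ∀ z, HasDerivAt E (Complex.exp (z ^ 2)) z) {r : ℝ}
    (hr : r ≠ 0) {σ : ℂ} (hσ : 0 < σ.re) :
    HasDerivAt (besselPrimitive E r) (Complex.sqrt σ * Complex.exp (r ^ 2 * (σ + 1 / σ))) σ := by
  have hr' : (r : ℂ) ≠ 0 := by exact_mod_cast hr
  have hσ0 : σ ≠ 0 := by rintro rfl; simp at hσ
  have hu := sqrt_ne_zero' hσ
  have hu2 := sqrt_sq' hσ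
  have hd := hasDerivAt_sqrt' hσ
  have hF : HasDerivAt (fun σ : ℂ ↦ (r : ℂ) ^ 2 * (σ + 1 / σ)) ((r : ℂ) ^ 2 * (1 - 1 / σ ^ 2)) σ := by
    refine (((hasDerivAt_id σ).add (hasDerivAt_inv hσ0)).const_mul ((r : ℂ) ^ 2)).congr_deriv ?_
      |>.congr_of_eventuallyEq ?_
    · field_simp; ring
    · exact Eventually.of_forall fun x ↦ by simp
  have hi := hd.inv hu
  have hm := (hE (r * (Complex.sqrt σ - 1 / Complex.sqrt σ))).comp σ ((hd.sub hi).const_mul (r : ℂ)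
    |>.congr_of_eventuallyEq (f₁ := fun σ ↦ r * (Complex.sqrt σ - 1 / Complex.sqrt σ))
      (Eventually.of_forall fun x ↦ by simp))
  have hp := (hE (r * (Complex.sqrt σ + 1 / Complex.sqrt σ))).comp σ ((hd.add hi).const_mul (r : ℂ)
    |>.congr_of_eventuallyEq (f₁ := fun σ ↦ r * (Complex.sqrt σ + 1 / Complex.sqrt σ))
      (Eventually.of_forall fun x ↦ by simp))
  have hQ := (((hd.mul hF.cexp).add (hm.const_mul (Complex.exp (2 * r ^ 2) * (r - 1 / (2 * r))))).sub
    (hp.const_mul (Complex.exp (-(2 * r ^ 2)) * (r + 1 / (2 * r))))).div_const ((r : ℂ) ^ 2)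
  refine hQ.congr_deriv ?_
  have hem : Complex.exp ((r * (Complex.sqrt σ - 1 / Complex.sqrt σ)) ^ 2) =
      Complex.exp (r ^ 2 * (σ + 1 / σ)) * Complex.exp (-(2 * r ^ 2)) := by
    rw [← Complex.exp_add]
    congr 1
    conv_rhs => rw [← hu2]
    generalize Complex.sqrt σ = u at hu ⊢
    field_simp
    ring
  have hep : Complex.exp ((r * (Complex.sqrt σ + 1 / Complex.sqrt σ)) ^ 2) =
      Complex.exp (r ^ 2 * (σ + 1 / σ)) * Complex.exp (2 * r ^ 2) := by
    rw [← Complex.exp_add]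
    congr 1
    conv_rhs => rw [← hu2]
    generalize Complex.sqrt σ = u at hu ⊢
    field_simp
    ring
  have hee : Complex.exp (2 * r ^ 2) * Complex.exp (-(2 * (r : ℂ) ^ 2)) = 1 := by
    rw [← Complex.exp_add]; simp
  rw [hem, hep]
  set X := Complex.exp (r ^ 2 * (σ + 1 / σ))
  set A := Complex.exp (2 * (r : ℂ) ^ 2)
  set B := Complex.exp (-(2 * (r : ℂ) ^ 2))
  set u := Complex.sqrt σ
  rw [div_eq_iff (pow_ne_zero 2 hr'), ← hu2]
  have e1 : X / (2 * u) + u * X * r ^ 2 * (1 - 1 / u ^ 4) +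
      (r - 1 / (2 * r)) * X * r * (1 / (2 * u) * (1 + 1 / u ^ 2)) -
      (r + 1 / (2 * r)) * X * r * (1 / (2 * u) * (1 - 1 / u ^ 2)) = u * X * r ^ 2 := by
    field_simp
    ring
  rw [← e1]
  have e2 : ∀ c d : ℂ, A * c * (X * B * d) = c * X * d := fun c d ↦ by
    linear_combination c * X * d * hee
  have e3 : ∀ c d : ℂ, B * c * (X * A * d) = c * X * d := fun c d ↦ by
    linear_combination c * X * d * hee
  rw [e2, e3]
  field_simp
  ring

/-- The behaviour of the square root at the end points of the major arc. -/
lemma norm_sqrt_endpoint {σ : ℂ} (hre : σ.re = 1) (him : σ.im ^ 2 = 36) :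
    1 ≤ ‖Complex.sqrt σ‖ ∧ ‖Complex.sqrt σ‖ ≤ 3 := by
  have hσ : 0 < σ.re := by rw [hre]; exact one_pos
  have h1 : ‖σ‖ ^ 2 = 37 := by
    rw [← normSq_eq_norm_sq, normSq_apply, hre]; linarith
  have h2 := norm_sqrt_sq hσ
  have h3 := norm_nonneg (Complex.sqrt σ)
  have h4 : ‖Complex.sqrt σ‖ ^ 4 = 37 := by
    rw [← h1, ← h2]; ring
  constructor
  · by_contra! h
    have := pow_le_one₀ (n := 4) h3 h.le
    linarith
  · by_contra! h
    have := pow_lt_pow_left₀ h (by norm_num) (n := 4) (by norm_num)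
    linarith

lemma re_sq_sub_im_sq (z : ℂ) : z.re ^ 2 - z.im ^ 2 = (z ^ 2).re := by
  rw [sq z, mul_re]; ring

lemma re_add_inv_endpoint {σ : ℂ} (hre : σ.re = 1) (him : σ.im ^ 2 = 36) :
    (σ + 1 / σ).re = 38 / 37 := by
  have h1 : normSq σ = 37 := by
    rw [normSq_apply, hre]; linarith
  rw [one_div, add_re, inv_re, h1, hre]; norm_num

set_option maxHeartbeats 1000000 in
lemma norm_besselPrimitive_sub_le (h0 : E 0 = 0)
    (hE : ∀ z, HasDerivAt E (Complex.exp (z ^ 2)) z) {r : ℝ} (hr : 2 ≤ r) {ε : ℝ}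
    (hε : ε ^ 2 = 1) {σ : ℂ} (hre : σ.re = 1) (him : σ.im = 6 * ε) :
    ‖besselPrimitive E r σ -
      Complex.exp (2 * r ^ 2) * (r - 1 / (2 * r)) / r ^ 2 * (ε * (√π / 2 * I))‖ ≤
      14 * Real.exp (38 / 37 * r ^ 2) := by
  have hσ : 0 < σ.re := by rw [hre]; exact one_pos
  have him2 : σ.im ^ 2 = 36 := by rw [him]; linear_combination 36 * hε
  have hr0 : 0 < r := by linarith
  have hr' : (r : ℂ) ≠ 0 := by exact_mod_cast hr0.ne'
  obtain ⟨hu1, hu3⟩ := norm_sqrt_endpoint hre him2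
  have hu2 := sqrt_sq' hσ
  have hu0 := sqrt_ne_zero' hσ
  have hupos := re_sqrt_pos hσ
  have hadd := re_add_inv_endpoint hre him2
  set u := Complex.sqrt σ with hu
  have hinv : ‖1 / u‖ ≤ 1 := by
    rw [norm_div, norm_one]; exact (div_le_one (by linarith)).mpr hu1
  have hrr : ∀ z : ℂ, ((r : ℂ) ^ 2 * z).re = r ^ 2 * z.re := fun z ↦ by
    rw [← ofReal_pow, re_ofReal_mul]
  have hm2 : (r * (u - 1 / u)).re ^ 2 - (r * (u - 1 / u)).im ^ 2 = -(36 / 37 * r ^ 2) := by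
    have : (r * (u - 1 / u)) ^ 2 = (r : ℂ) ^ 2 * ((σ + 1 / σ) - (2 : ℝ)) := by
      rw [← hu2]; push_cast; field_simp; ring
    rw [re_sq_sub_im_sq, this, hrr, sub_re, hadd, ofReal_re]; ring
  have hp2 : (r * (u + 1 / u)).re ^ 2 - (r * (u + 1 / u)).im ^ 2 = 38 / 37 * r ^ 2 + 2 * r ^ 2 := by
    have : (r * (u + 1 / u)) ^ 2 = (r : ℂ) ^ 2 * ((σ + 1 / σ) + (2 : ℝ)) := by
      rw [← hu2]; push_cast; field_simp; ring
    rw [re_sq_sub_im_sq, this, hrr, add_re _ ((2 : ℝ) : ℂ), hadd, ofReal_re]; ring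
  have hnm : ‖r * (u - 1 / u)‖ ≤ 4 * r := by
    rw [norm_mul, norm_real, Real.norm_of_nonneg hr0.le]
    nlinarith [norm_sub_le u (1 / u)]
  have hnp : ‖r * (u + 1 / u)‖ ≤ 4 * r := by
    rw [norm_mul, norm_real, Real.norm_of_nonneg hr0.le]
    nlinarith [norm_add_le u (1 / u)]
  have hεc : (ε : ℂ) ^ 2 = 1 := by exact_mod_cast hε
  have hεim : 0 < (ε * (r * (u - 1 / u))).im := by
    have h1 : 2 * u.re * u.im = 6 * ε := by
      rw [← him, ← hu2, sq, mul_im]; ring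
    have h2 : (ε * (r * (u - 1 / u))).im = r * ((1 + 1 / normSq u) * (ε * u.im)) := by
      rw [im_ofReal_mul, im_ofReal_mul, sub_im, one_div, inv_im]; ring
    have h3 : 0 < ε * u.im := by
      have : 0 < u.re * (ε * u.im) := by
        have h4 : u.re * (ε * u.im) = 3 := by linear_combination ε / 2 * h1 + 3 * hε
        rw [h4]
        norm_num
      exact pos_of_mul_pos_right this hupos.le
    rw [h2]
    have := normSq_pos.mpr hu0
    positivity
  have hEm : ‖E (r * (u - 1 / u)) - ε * (√π / 2 * I)‖ ≤
      (4 * r + 1) * Real.exp (-(36 / 37 * r ^ 2)) := by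
    have hsq : (ε * (r * (u - 1 / u))).re ^ 2 - (ε * (r * (u - 1 / u))).im ^ 2 =
        -(36 / 37 * r ^ 2) := by
      rw [← hm2, re_ofReal_mul, im_ofReal_mul]
      linear_combination ((r * (u - 1 / u)).re ^ 2 - (r * (u - 1 / u)).im ^ 2) * hε
    have hεn : ‖(ε : ℂ)‖ = 1 := by
      rw [← sq_eq_sq₀ (norm_nonneg _) zero_le_one, ← norm_pow, hεc, norm_one, one_pow]
    have h := norm_primitive_exp_sq_sub_le h0 hE hεim (by nlinarith)
    rw [hsq, norm_mul, hεn, one_mul] at h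
    refine le_trans (le_of_eq ?_) (h.trans ?_)
    · have hodd : E (ε * (r * (u - 1 / u))) = ε * E (r * (u - 1 / u)) := by
        rcases eq_or_eq_neg_of_sq_eq_sq ε 1 (by rw [hε, one_pow]) with h | h
        · simp [h]
        · simp only [h, ofReal_neg, ofReal_one, neg_one_mul]
          exact primitive_exp_sq_neg h0 hE _
      rw [hodd, ← one_mul ‖E (r * (u - 1 / u)) - ε * (√π / 2 * I)‖, ← hεn, ← norm_mul]
      congr 1
      linear_combination -(√π / 2 * I) * hεc
    · gcongr
  have hEp : ‖E (r * (u + 1 / u))‖ ≤ 4 * r * Real.exp (38 / 37 * r ^ 2 + 2 * r ^ 2) := by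
    have h := norm_primitive_exp_sq_le h0 hE (w := r * (u + 1 / u)) (by nlinarith)
    rw [hp2] at h
    exact h.trans (by gcongr)
  have hX : ‖Complex.exp (r ^ 2 * (σ + 1 / σ))‖ = Real.exp (38 / 37 * r ^ 2) := by
    rw [norm_exp, hrr, hadd]; ring_nf
  have hA : ‖Complex.exp (2 * (r : ℂ) ^ 2)‖ = Real.exp (2 * r ^ 2) := by
    rw [← ofReal_pow, ← ofReal_ofNat 2, ← ofReal_mul, norm_exp, ofReal_re]
  have hB : ‖Complex.exp (-(2 * (r : ℂ) ^ 2))‖ = Real.exp (-(2 * r ^ 2)) := by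
    rw [← ofReal_pow, ← ofReal_ofNat 2, ← ofReal_mul, ← ofReal_neg, norm_exp, ofReal_re]
  have hinvr : 1 / (2 * r) ≤ 1 / 4 := by
    apply one_div_le_one_div_of_le <;> linarith
  have hinvr0 : 0 < 1 / (2 * r) := by positivity
  have hcm : ‖(r : ℂ) - 1 / (2 * r)‖ ≤ r := by
    have : (r : ℂ) - 1 / (2 * r) = ((r - 1 / (2 * r) : ℝ) : ℂ) := by push_cast; rfl
    rw [this, norm_real, Real.norm_of_nonneg (by linarith)]
    linarith
  have hcp : ‖(r : ℂ) + 1 / (2 * r)‖ ≤ r + 1 / 4 := by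
    have : (r : ℂ) + 1 / (2 * r) = ((r + 1 / (2 * r) : ℝ) : ℂ) := by push_cast; rfl
    rw [this, norm_real, Real.norm_of_nonneg (by linarith)]
    linarith
  have hsplit : besselPrimitive E r σ -
      Complex.exp (2 * r ^ 2) * (r - 1 / (2 * r)) / r ^ 2 * (ε * (√π / 2 * I)) =
      (u * Complex.exp (r ^ 2 * (σ + 1 / σ)) +
        Complex.exp (2 * r ^ 2) * (r - 1 / (2 * r)) *
          (E (r * (u - 1 / u)) - ε * (√π / 2 * I)) -
        Complex.exp (-(2 * r ^ 2)) * (r + 1 / (2 * r)) * E (r * (u + 1 / u))) / r ^ 2 := by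
    rw [besselPrimitive, ← hu]
    ring
  have hr2 : ‖(r : ℂ) ^ 2‖ = r ^ 2 := by
    rw [norm_pow, norm_real, Real.norm_of_nonneg hr0.le]
  rw [hsplit, norm_div, hr2, div_le_iff₀ (by positivity)]
  set e := Real.exp (38 / 37 * r ^ 2) with he
  have he0 : 0 < e := Real.exp_pos _
  have t1 : ‖u * Complex.exp (r ^ 2 * (σ + 1 / σ))‖ ≤ 3 * e := by
    rw [norm_mul, hX]; gcongr
  have t2 : ‖Complex.exp (2 * r ^ 2) * (r - 1 / (2 * r)) *
      (E (r * (u - 1 / u)) - ε * (√π / 2 * I))‖ ≤ r * (4 * r + 1) * e := by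
    rw [norm_mul, norm_mul, hA]
    calc _ ≤ Real.exp (2 * r ^ 2) * r * ((4 * r + 1) * Real.exp (-(36 / 37 * r ^ 2))) := by
          gcongr
      _ = r * (4 * r + 1) * (Real.exp (2 * r ^ 2) * Real.exp (-(36 / 37 * r ^ 2))) := by ring
      _ = _ := by rw [← Real.exp_add, he]; ring_nf
  have t3 : ‖Complex.exp (-(2 * r ^ 2)) * (r + 1 / (2 * r)) * E (r * (u + 1 / u))‖ ≤
      (r + 1 / 4) * (4 * r) * e := by
    rw [norm_mul, norm_mul, hB]
    calc _ ≤ Real.exp (-(2 * r ^ 2)) * (r + 1 / 4) *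
          (4 * r * Real.exp (38 / 37 * r ^ 2 + 2 * r ^ 2)) := by gcongr
      _ = (r + 1 / 4) * (4 * r) *
          (Real.exp (-(2 * r ^ 2)) * Real.exp (38 / 37 * r ^ 2 + 2 * r ^ 2)) := by ring
      _ = _ := by rw [← Real.exp_add, he]; ring_nf
  refine (norm_sub_le _ _).trans ((add_le_add (norm_add_le _ _) le_rfl).trans ?_)
  have : 3 + r * (4 * r + 1) + (r + 1 / 4) * (4 * r) ≤ 14 * r ^ 2 := by nlinarith
  nlinarith [mul_le_mul_of_nonneg_right this he0.le]

lemma continuous_besselIntegrand (r : ℝ) : Continuous fun v : ℝ ↦ Complex.sqrt (1 + v * I) *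
    Complex.exp (r ^ 2 * ((1 + v * I) + 1 / (1 + v * I))) := by
  refine continuous_iff_continuousAt.mpr fun v ↦ ?_
  have hpos : 0 < (1 + v * I : ℂ).re := by simp
  have hne : (1 + v * I : ℂ) ≠ 0 := fun h ↦ by simp [h] at hpos
  have h1 : ContinuousAt (fun v : ℝ ↦ (1 + v * I : ℂ)) v := by fun_prop
  have h2 : ContinuousAt (fun v : ℝ ↦ Complex.sqrt (1 + v * I)) v :=
    ContinuousAt.comp (f := fun v : ℝ ↦ (1 + v * I : ℂ))
      (Complex.continuousAt_sqrt (Or.inl hpos.le)) h1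
  have h3 : ContinuousAt (fun v : ℝ ↦ (1 / (1 + v * I) : ℂ)) v :=
    ContinuousAt.div continuousAt_const h1 hne
  exact h2.mul ((h1.add h3).const_mul _).cexp

/-- The main term of the partition function: a truncated Bessel integral of order `3 / 2`. -/
lemma norm_integral_sqrt_mul_exp_sub_le {r : ℝ} (hr : 2 ≤ r) :
    ‖(∫ v in (-6 : ℝ)..6, Complex.sqrt (1 + v * I) *
        Complex.exp (r ^ 2 * ((1 + v * I) + 1 / (1 + v * I)))) -
      ((√π * Real.exp (2 * r ^ 2) * (r - 1 / (2 * r)) / r ^ 2 : ℝ) : ℂ)‖ ≤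
      28 * Real.exp (38 / 37 * r ^ 2) := by
  obtain ⟨E, h0, hE⟩ := exists_primitive_exp_sq
  have hpos : ∀ v : ℝ, 0 < (1 + v * I : ℂ).re := fun v ↦ by simp
  have hd : ∀ v ∈ Set.uIcc (-6 : ℝ) 6, HasDerivAt
      (fun v : ℝ ↦ besselPrimitive E r (1 + v * I) / I)
      (Complex.sqrt (1 + v * I) * Complex.exp (r ^ 2 * ((1 + v * I) + 1 / (1 + v * I)))) v := by
    intro v _
    have h1 : HasDerivAt (fun t : ℂ ↦ 1 + t * I) I v := by
      simpa using ((hasDerivAt_id (v : ℂ)).mul_const I).const_add 1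
    have h2 := ((HasDerivAt.comp (v : ℂ)
      (hasDerivAt_besselPrimitive hE (r := r) (by linarith) (hpos v)) h1).div_const I).comp_ofReal
    exact h2.congr_deriv (mul_div_cancel_right₀ _ I_ne_zero)
  rw [intervalIntegral.integral_eq_sub_of_hasDerivAt hd
    ((continuous_besselIntegrand r).intervalIntegrable _ _)]
  have b1 := norm_besselPrimitive_sub_le h0 hE hr (ε := 1) (by norm_num) (σ := 1 + (6 : ℝ) * I)
    (by simp) (by simp)
  have b2 := norm_besselPrimitive_sub_le h0 hE hr (ε := -1) (by norm_num) (σ := 1 + (-6 : ℝ) * I)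
    (by simp) (by simp)
  have b3 := (norm_sub_le _ _).trans (add_le_add b1 b2)
  refine le_trans (le_of_eq ?_) (b3.trans (by linarith))
  have hI : ∀ z : ℂ, ‖z‖ = ‖I * z‖ := fun z ↦ by rw [norm_mul, norm_I, one_mul]
  rw [hI]
  congr 1
  push_cast
  field_simp
  ring_nf

end BesselIntegral

end PartitionAsymptotics

namespace PartitionAsymptotics

open Filter Topology Complex MeasureTheory

section CircleMethod

/-- The integrand representing `p n` on the vertical line through `y`. -/
noncomputable def circleIntegrand (n : ℕ) (y t : ℝ) : ℂ :=
  (eulerProd (Complex.exp (-(2 * π * (y + t * I)))))⁻¹ * Complex.exp (2 * π * n * (y + t * I))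

lemma continuous_circleIntegrand (n : ℕ) {y : ℝ} (hy : 0 < y) :
    Continuous (circleIntegrand n y) := by
  have hre : ∀ t : ℝ, ((y : ℂ) + t * I).re = y := by intro t; simp
  have hlt : ∀ t : ℝ, ‖Complex.exp (-(2 * π * (y + t * I)))‖ < 1 := fun t ↦
    norm_cexp_neg_two_pi_mul_lt_one (by rw [hre]; exact hy)
  have hr1 : Real.exp (-(2 * π * y)) < 1 := by
    have := hlt 0
    rwa [norm_cexp_neg_two_pi_mul, hre] at this
  have h : Continuous fun t : ℝ ↦
      ∑' m : ℕ, (p m : ℂ) * Complex.exp (-(2 * π * (y + t * I))) ^ m := by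
    refine continuous_tsum (fun m ↦ by fun_prop)
      (summable_p_mul_pow (Real.exp_pos _).le hr1) fun m t ↦ ?_
    rw [norm_mul, norm_pow, norm_cexp_neg_two_pi_mul, hre, norm_real,
      Real.norm_of_nonneg (p_nonneg m)]
  have h2 : circleIntegrand n y = fun t : ℝ ↦
      (∑' m : ℕ, (p m : ℂ) * Complex.exp (-(2 * π * (y + t * I))) ^ m) *
        Complex.exp (2 * π * n * (y + t * I)) := by
    funext t
    rw [circleIntegrand, (hasSum_p_mul_pow (hlt t)).tsum_eq]
  rw [h2]
  fun_prop

variable {n : ℕ} {Y y κ : ℝ}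

lemma sqrt_real_mul {s : ℂ} (hy : 0 < y) (hs : s ≠ 0) :
    Complex.sqrt (y * s) = √y * Complex.sqrt s := by
  rw [sqrt_eq_exp (mul_ne_zero (by exact_mod_cast hy.ne') hs), sqrt_eq_exp hs,
    Complex.log_ofReal_mul hy hs, add_div, Complex.exp_add, Real.sqrt_eq_rpow,
    Real.rpow_def_of_pos hy]
  push_cast
  congr 2
  ring

lemma circleIntegrand_mul (hY : 0 < Y) (hN : Y ^ 2 = 24 * n - 1) (hy : y = 1 / Y)
    (hκ : κ = π * Y / 12) (v : ℝ) :
    circleIntegrand n y (y * v) = √y * (Complex.sqrt (1 + v * I) *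
      Complex.exp (κ * ((1 + v * I) + 1 / (1 + v * I)))) *
      (eulerProd (Complex.exp (-(2 * π * (Y * (1 / (1 + v * I)))))))⁻¹ := by
  have hy0 : 0 < y := by rw [hy]; positivity
  have hs : ((y : ℂ) + (y * v : ℝ) * I) = y * (1 + v * I) := by push_cast; ring
  have hpos : 0 < (1 + v * I : ℂ).re := by simp
  have hne : (1 + v * I : ℂ) ≠ 0 := fun h ↦ by simp [h] at hpos
  have hYc : (Y : ℂ) ≠ 0 := by exact_mod_cast hY.ne'
  have hNc : (Y : ℂ) ^ 2 = 24 * n - 1 := by exact_mod_cast hN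
  have hyc : (y : ℂ) = 1 / Y := by rw [hy]; push_cast; rfl
  have hκc : (κ : ℂ) = π * Y / 12 := by rw [hκ]; push_cast; rfl
  have hspos : 0 < ((y : ℂ) * (1 + v * I)).re := by rw [re_ofReal_mul]; positivity
  have hinv : 1 / ((y : ℂ) * (1 + v * I)) = Y * (1 / (1 + v * I)) := by
    rw [hyc]; field_simp
  have hexp : Complex.exp (π / 12 * (Y * (1 / (1 + v * I))) - π / 12 * (y * (1 + v * I))) *
      Complex.exp (2 * π * n * (y * (1 + v * I))) =
      Complex.exp (κ * ((1 + v * I) + 1 / (1 + v * I))) := by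
    rw [← Complex.exp_add]
    congr 1
    rw [hκc, hyc]
    generalize (1 + v * I : ℂ) = z at *
    field_simp
    linear_combination -z ^ 2 * hNc
  rw [circleIntegrand, hs, inv_eulerProd_eq hspos, hinv, sqrt_real_mul hy0 hne, ← hexp]
  ring

lemma norm_sqrt_le_three {v : ℝ} (hv : |v| ≤ 6) : ‖Complex.sqrt (1 + v * I)‖ ≤ 3 := by
  have hpos : 0 < (1 + v * I : ℂ).re := by simp
  have h1 := norm_sqrt_sq hpos
  have h2 : ‖(1 + v * I : ℂ)‖ ≤ 1 + 6 := by
    refine (norm_add_le _ _).trans ?_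
    rw [norm_one, norm_mul, norm_I, norm_real, Real.norm_eq_abs]
    linarith
  by_contra! h
  nlinarith

lemma re_inv_one_add_mul_I (v : ℝ) : (1 / (1 + v * I) : ℂ).re = 1 / (1 + v ^ 2) := by
  rw [one_div, inv_re, normSq_apply]
  simp [sq]

lemma norm_circleIntegrand_mul_sub_le (hY : 200 ≤ Y) (hN : Y ^ 2 = 24 * n - 1) (hy : y = 1 / Y)
    (hκ : κ = π * Y / 12) {v : ℝ} (hv : |v| ≤ 6) :
    ‖circleIntegrand n y (y * v) - √y * (Complex.sqrt (1 + v * I) *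
      Complex.exp (κ * ((1 + v * I) + 1 / (1 + v * I))))‖ ≤
      √y * (12 * Real.exp (2 * κ - 24 / 37 * κ)) := by
  have hκ0 : 0 < κ := by rw [hκ]; positivity
  have hv2 : v ^ 2 ≤ 36 := by nlinarith [sq_abs v, abs_nonneg v]
  have hinv : 1 / 37 ≤ 1 / (1 + v ^ 2) := by
    apply one_div_le_one_div_of_le <;> nlinarith [sq_nonneg v]
  have hinv1 : 1 / (1 + v ^ 2) ≤ 1 := by
    rw [div_le_one (by positivity)]; nlinarith [sq_nonneg v]
  have hq : ‖Complex.exp (-(2 * π * (Y * (1 / (1 + v * I)))))‖ ≤ Real.exp (-(24 / 37 * κ)) := by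
    rw [norm_cexp_neg_two_pi_mul, re_ofReal_mul, re_inv_one_add_mul_I, Real.exp_le_exp, hκ]
    nlinarith [mul_le_mul_of_nonneg_left hinv (by positivity : 0 ≤ 2 * π * Y)]
  have hquarter : Real.exp (-(24 / 37 * κ)) ≤ 1 / 4 := by
    rw [Real.exp_neg, ← one_div]
    apply one_div_le_one_div_of_le (by norm_num)
    have h1 := Real.add_one_le_exp (24 / 37 * κ)
    have h2 : 50 ≤ κ := by rw [hκ]; nlinarith [Real.pi_gt_three]
    linarith
  have hδ := norm_inv_eulerProd_sub_one_le (hq.trans hquarter)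
  have hexp : ‖Complex.exp (κ * ((1 + v * I) + 1 / (1 + v * I)))‖ ≤ Real.exp (2 * κ) := by
    rw [norm_exp, Real.exp_le_exp, re_ofReal_mul, add_re, re_inv_one_add_mul_I]
    simp only [add_re, one_re, mul_re, ofReal_re, I_re, mul_zero, ofReal_im, I_im, mul_one,
      sub_self, add_zero]
    nlinarith
  rw [circleIntegrand_mul (by linarith) hN hy hκ, ← mul_sub_one, norm_mul, norm_mul, norm_mul,
    norm_real, Real.norm_of_nonneg (Real.sqrt_nonneg y)]
  calc √y * (‖Complex.sqrt (1 + v * I)‖ * ‖Complex.exp (κ * ((1 + v * I) + 1 / (1 + v * I)))‖) *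
        ‖(eulerProd (Complex.exp (-(2 * π * (Y * (1 / (1 + v * I)))))))⁻¹ - 1‖
      ≤ √y * (3 * Real.exp (2 * κ)) * (4 * Real.exp (-(24 / 37 * κ))) := by
        gcongr
        · exact norm_sqrt_le_three hv
        · exact hδ.trans (by gcongr)
    _ = √y * (12 * (Real.exp (2 * κ) * Real.exp (-(24 / 37 * κ)))) := by ring
    _ = _ := by rw [← Real.exp_add]; ring_nf

lemma norm_circleIntegrand_le (hκ58 : 58 ≤ κ) (hY : 200 ≤ Y) (hN : Y ^ 2 = 24 * n - 1)
    (hy : y = 1 / Y) (hκ : κ = π * Y / 12) {t : ℝ} (ht : 6 * y ≤ |t|) (ht' : |t| ≤ 1 / 2) :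
    ‖circleIntegrand n y t‖ ≤ 2 * √y * Real.exp (2 * κ - 0.43 * κ) := by
  have hY0 : 0 < Y := by linarith
  have hy0 : 0 < y := by rw [hy]; positivity
  have hre : ((y : ℂ) + t * I).re = y := by simp
  have hq : ‖Complex.exp (-(2 * π * (y + t * I)))‖ = Real.exp (-(2 * π * y)) := by
    rw [norm_cexp_neg_two_pi_mul, hre]
  have hlt := norm_cexp_neg_two_pi_mul_lt_one (s := y + t * I) (by rw [hre]; exact hy0)
  have hsave := minor_arc_saving hκ58 (by rw [hy, hκ]; field_simp) ht ht'
  have hle := norm_inv_eulerProd_le hlt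
  rw [hq] at hle
  -- the value on the real axis
  have h0 := circleIntegrand_mul hY0 hN hy hκ 0
  have hsmall : ‖Complex.exp (-(2 * π * (Y * (1 / (1 + (0 : ℝ) * I)))))‖ ≤ 1 / 4 := by
    rw [norm_cexp_neg_two_pi_mul, re_ofReal_mul, re_inv_one_add_mul_I, Real.exp_neg, ← one_div]
    apply one_div_le_one_div_of_le (by norm_num)
    have h1 := Real.add_one_le_exp (2 * π * (Y * (1 / (1 + 0 ^ 2))))
    nlinarith [Real.pi_gt_three]
  have hδ := norm_inv_eulerProd_sub_one_le hsmall
  have htwo : ‖(eulerProd (Complex.exp (-(2 * π * (Y * (1 / (1 + (0 : ℝ) * I)))))))⁻¹‖ ≤ 2 := by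
    have := norm_sub_norm_le
      (eulerProd (Complex.exp (-(2 * π * (Y * (1 / (1 + (0 : ℝ) * I)))))))⁻¹ 1
    rw [norm_one] at this
    linarith
  have hexp0 : ‖Complex.exp (κ * ((1 + (0 : ℝ) * I) + 1 / (1 + (0 : ℝ) * I)))‖ =
      Real.exp (2 * κ) := by
    rw [norm_exp, re_ofReal_mul, add_re, re_inv_one_add_mul_I]
    simp only [ofReal_zero, zero_mul, add_zero, one_re]
    ring_nf
  have hreal : ‖circleIntegrand n y 0‖ ≤ √y * (2 * Real.exp (2 * κ)) := by
    rw [mul_zero] at h0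
    rw [h0, norm_mul, norm_mul, norm_mul, hexp0, norm_real, Real.norm_of_nonneg (Real.sqrt_nonneg y)]
    simp only [ofReal_zero, zero_mul, add_zero, Complex.sqrt_one, norm_one, one_mul] at htwo ⊢
    rw [mul_assoc, mul_comm (Real.exp (2 * κ))]
    gcongr
  have hn : ∀ t : ℝ, ‖Complex.exp (2 * π * n * (y + t * I))‖ = Real.exp (2 * π * n * y) := by
    intro t
    rw [Complex.norm_exp]
    congr 1
    have : (2 * π * n * (y + t * I) : ℂ) = ((2 * π * n : ℝ) : ℂ) * (y + t * I) := by
      push_cast; ring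
    rw [this, re_ofReal_mul]
    simp
  have hval : ‖circleIntegrand n y 0‖ =
      ‖(eulerProd ((Real.exp (-(2 * π * y)) : ℝ) : ℂ))⁻¹‖ * Real.exp (2 * π * n * y) := by
    rw [circleIntegrand, norm_mul, hn]
    congr 4
    push_cast
    congr 1
    ring
  calc ‖circleIntegrand n y t‖
      = ‖(eulerProd (Complex.exp (-(2 * π * (y + t * I)))))⁻¹‖ * Real.exp (2 * π * n * y) := by
        rw [circleIntegrand, norm_mul, hn]
    _ ≤ ‖(eulerProd ((Real.exp (-(2 * π * y)) : ℝ) : ℂ))⁻¹‖ * Real.exp (-(0.43 * κ)) *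
        Real.exp (2 * π * n * y) := by
        refine mul_le_mul_of_nonneg_right (hle.trans ?_) (Real.exp_pos _).le
        gcongr
    _ = ‖circleIntegrand n y 0‖ * Real.exp (-(0.43 * κ)) := by rw [hval]; ring
    _ ≤ √y * (2 * Real.exp (2 * κ)) * Real.exp (-(0.43 * κ)) := by gcongr
    _ = 2 * √y * (Real.exp (2 * κ) * Real.exp (-(0.43 * κ))) := by ring
    _ = _ := by rw [← Real.exp_add]; ring_nf

lemma abs_p_sub_le (hκ58 : 58 ≤ κ) (hY : 200 ≤ Y) (hN : Y ^ 2 = 24 * n - 1)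
    (hy : y = 1 / Y) (hκ : κ = π * Y / 12) :
    |p n - y * √y * (√π * Real.exp (2 * κ) * (√κ - 1 / (2 * √κ)) / κ)| ≤
      y * √y * (28 * Real.exp (38 / 37 * κ) + 144 * Real.exp (2 * κ - 24 / 37 * κ)) +
        2 * √y * Real.exp (2 * κ - 0.43 * κ) := by
  have hY0 : 0 < Y := by linarith
  have hκ0 : 0 < κ := by linarith
  have hy0 : 0 < y := by rw [hy]; positivity
  have hy1 : 6 * y ≤ 1 / 2 := by
    have : y ≤ 1 / 200 := by rw [hy]; exact one_div_le_one_div_of_le (by norm_num) hY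
    linarith
  have hc := continuous_circleIntegrand n hy0
  have hint : ∀ a b : ℝ, IntervalIntegrable (circleIntegrand n y) volume a b := fun a b ↦
    hc.intervalIntegrable a b
  have hp : (p n : ℂ) = ∫ t in (-(1 / 2) : ℝ)..(1 / 2), circleIntegrand n y t :=
    p_eq_integral n hy0
  have hs1 := intervalIntegral.integral_add_adjacent_intervals (hint (-(1 / 2)) (-(6 * y)))
    (hint (-(6 * y)) (6 * y))
  have hs2 := intervalIntegral.integral_add_adjacent_intervals (hint (-(1 / 2)) (6 * y))
    (hint (6 * y) (1 / 2))
  set C := 2 * √y * Real.exp (2 * κ - 0.43 * κ) with hC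
  have hm1 : ‖∫ t in (-(1 / 2) : ℝ)..(-(6 * y)), circleIntegrand n y t‖ ≤
      C * |-(6 * y) - (-(1 / 2))| := by
    refine intervalIntegral.norm_integral_le_of_norm_le_const fun t ht ↦ ?_
    rw [Set.uIoc_of_le (by linarith)] at ht
    refine norm_circleIntegrand_le hκ58 hY hN hy hκ ?_ ?_ <;>
      rw [abs_of_neg (by linarith [ht.2])] <;> linarith [ht.1, ht.2]
  have hm2 : ‖∫ t in (6 * y)..(1 / 2), circleIntegrand n y t‖ ≤ C * |1 / 2 - 6 * y| := by
    refine intervalIntegral.norm_integral_le_of_norm_le_const fun t ht ↦ ?_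
    rw [Set.uIoc_of_le hy1] at ht
    refine norm_circleIntegrand_le hκ58 hY hN hy hκ ?_ ?_ <;>
      rw [abs_of_pos (by linarith [ht.1])] <;> linarith [ht.1, ht.2]
  have hC0 : 0 ≤ C := by positivity
  rw [abs_of_nonneg (by linarith)] at hm1 hm2
  have hscale : ∫ t in (-(6 * y))..(6 * y), circleIntegrand n y t =
      y * ∫ v in (-6 : ℝ)..6, circleIntegrand n y (y * v) := by
    have := intervalIntegral.smul_integral_comp_mul_left (a := -6) (b := 6) (circleIntegrand n y) y
    rw [real_smul] at this
    rw [this]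
    congr 1 <;> ring
  set B : ℝ → ℂ := fun v ↦ Complex.sqrt (1 + v * I) *
      Complex.exp (κ * ((1 + v * I) + 1 / (1 + v * I))) with hB
  have hBc : Continuous B := by
    have := continuous_besselIntegrand √κ
    rwa [← ofReal_pow, Real.sq_sqrt hκ0.le] at this
  have hmaj : ‖(∫ v in (-6 : ℝ)..6, circleIntegrand n y (y * v)) - √y * ∫ v in (-6 : ℝ)..6, B v‖ ≤
      √y * (12 * Real.exp (2 * κ - 24 / 37 * κ)) * |6 - (-6)| := by
    have hi1 : IntervalIntegrable (fun v ↦ circleIntegrand n y (y * v)) volume (-6) 6 :=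
      Continuous.intervalIntegrable (by fun_prop) _ _
    have hi2 : IntervalIntegrable (fun v ↦ √y * B v) volume (-6) 6 :=
      Continuous.intervalIntegrable (by fun_prop) _ _
    rw [← intervalIntegral.integral_const_mul, ← intervalIntegral.integral_sub hi1 hi2]
    refine intervalIntegral.norm_integral_le_of_norm_le_const fun v hv ↦ ?_
    rw [Set.uIoc_of_le (by norm_num)] at hv
    exact norm_circleIntegrand_mul_sub_le hY hN hy hκ (abs_le.mpr ⟨hv.1.le, hv.2⟩)
  have hbes : ‖(∫ v in (-6 : ℝ)..6, B v) -
      ((√π * Real.exp (2 * κ) * (√κ - 1 / (2 * √κ)) / κ : ℝ) : ℂ)‖ ≤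
      28 * Real.exp (38 / 37 * κ) := by
    have h2 : (2 : ℝ) ≤ √κ := Real.le_sqrt_of_sq_le (by linarith)
    have := norm_integral_sqrt_mul_exp_sub_le h2
    rwa [← ofReal_pow, Real.sq_sqrt hκ0.le] at this
  have habs : |(6 : ℝ) - (-6)| = 12 := by norm_num
  rw [habs] at hmaj
  set M0 := √π * Real.exp (2 * κ) * (√κ - 1 / (2 * √κ)) / κ
  rw [← Real.norm_eq_abs, ← norm_real]
  have hsplit : ((p n - y * √y * M0 : ℝ) : ℂ) =
      ((∫ t in (-(1 / 2) : ℝ)..(-(6 * y)), circleIntegrand n y t) +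
        ∫ t in (6 * y)..(1 / 2), circleIntegrand n y t) +
      y * (((∫ v in (-6 : ℝ)..6, circleIntegrand n y (y * v)) - √y * ∫ v in (-6 : ℝ)..6, B v) +
        √y * ((∫ v in (-6 : ℝ)..6, B v) - (M0 : ℂ))) := by
    push_cast
    rw [hp, ← hs2, ← hs1, hscale]
    ring
  rw [hsplit]
  have hn1 : ‖(y : ℂ) * (((∫ v in (-6 : ℝ)..6, circleIntegrand n y (y * v)) -
      √y * ∫ v in (-6 : ℝ)..6, B v) + √y * ((∫ v in (-6 : ℝ)..6, B v) - (M0 : ℂ)))‖ ≤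
      y * (√y * (12 * Real.exp (2 * κ - 24 / 37 * κ)) * 12 +
        √y * (28 * Real.exp (38 / 37 * κ))) := by
    rw [norm_mul, norm_real, Real.norm_of_nonneg hy0.le]
    refine mul_le_mul_of_nonneg_left ((norm_add_le _ _).trans (add_le_add hmaj ?_)) hy0.le
    rw [norm_mul, norm_real, Real.norm_of_nonneg (Real.sqrt_nonneg y)]
    gcongr
  have hn2 := norm_add_le (∫ t in (-(1 / 2) : ℝ)..(-(6 * y)), circleIntegrand n y t)
    (∫ t in (6 * y)..(1 / 2), circleIntegrand n y t)
  refine (norm_add_le _ _).trans ?_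
  have : 0 ≤ C * (12 * y) := by positivity
  nlinarith

lemma pow_six_mul_exp_neg_le_one (hκ : 58 ≤ κ) : κ ^ 6 * Real.exp (-(0.43 * κ)) ≤ 1 := by
  have hκ0 : 0 < κ := by linarith
  have hlog : Real.log κ ≤ 6 * Real.log 2 + (κ / 64 - 1) := by
    have h1 := Real.log_le_sub_one_of_pos (by positivity : 0 < κ / 64)
    rw [Real.log_div hκ0.ne' (by norm_num), show (64 : ℝ) = 2 ^ 6 by norm_num,
      Real.log_pow] at h1
    push_cast at h1
    linarith
  rw [← Real.exp_log (by positivity : 0 < κ ^ 6), ← Real.exp_add, Real.exp_le_one_iff,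
    Real.log_pow]
  push_cast
  linarith [Real.log_two_lt_d9]

/-- The leading term of the Hardy–Ramanujan–Rademacher series, where `κ = π * √(24 n - 1) / 12`. -/
noncomputable def mainTerm (Y κ : ℝ) : ℝ :=
  √12 / Y ^ 2 * Real.exp (2 * κ) * (1 - 1 / (2 * κ))

lemma mainTerm_eq (hY : 0 < Y) (hy : y = 1 / Y) (hκ : κ = π * Y / 12) :
    y * √y * (√π * Real.exp (2 * κ) * (√κ - 1 / (2 * √κ)) / κ) = mainTerm Y κ := by
  have hκ0 : 0 < κ := by rw [hκ]; positivity
  have hs : √κ ^ 2 = κ := Real.sq_sqrt hκ0.le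
  have h0 : 0 < √κ := Real.sqrt_pos.mpr hκ0
  have hk : (√κ - 1 / (2 * √κ)) / κ = (1 / √κ) * (1 - 1 / (2 * κ)) := by
    rw [← hs, Real.sqrt_sq h0.le]; field_simp
  have hroot : √y * √π * (1 / √κ) = √12 / Y := by
    have h1 : √κ = √π * √Y / √12 := by
      rw [hκ, Real.sqrt_div (by positivity), Real.sqrt_mul (by positivity)]
    have h2 : √Y ^ 2 = Y := Real.sq_sqrt hY.le
    have h3 : 0 < √Y := Real.sqrt_pos.mpr hY
    have h4 : 0 < √π := Real.sqrt_pos.mpr Real.pi_pos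
    have h5 : √12 ^ 2 = 12 := Real.sq_sqrt (by norm_num)
    rw [h1, hy, Real.sqrt_div zero_le_one, Real.sqrt_one]
    nth_rw 3 [← h2]
    field_simp
  calc _ = y * (√y * √π * Real.exp (2 * κ) * ((√κ - 1 / (2 * √κ)) / κ)) := by ring
    _ = y * (√y * √π * (1 / √κ)) * Real.exp (2 * κ) * (1 - 1 / (2 * κ)) := by rw [hk]; ring
    _ = _ := by rw [hroot, hy, mainTerm]; ring

lemma mainTerm_pos (hY : 0 < Y) (hκ : 58 ≤ κ) : 0 < mainTerm Y κ := by
  have : 1 / (2 * κ) < 1 := by rw [div_lt_one (by linarith)]; linarith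
  have : 0 < 1 - 1 / (2 * κ) := by linarith
  unfold mainTerm
  positivity

lemma abs_p_sub_mainTerm_le (hκ58 : 58 ≤ κ) (hY : 200 ≤ Y) (hN : Y ^ 2 = 24 * n - 1)
    (hκ : κ = π * Y / 12) : |p n - mainTerm Y κ| ≤ mainTerm Y κ / κ ^ 4 := by
  have hY0 : 0 < Y := by linarith
  have hκ0 : 0 < κ := by linarith
  obtain ⟨y, hy⟩ : ∃ y, y = 1 / Y := ⟨_, rfl⟩
  have hy0 : 0 < y := by rw [hy]; positivity
  have h := abs_p_sub_le hκ58 hY hN hy hκ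
  rw [mainTerm_eq hY0 hy hκ] at h
  refine h.trans ?_
  have hs : √κ ^ 2 = κ := Real.sq_sqrt hκ0.le
  have hr : 7.6 ≤ √κ := Real.le_sqrt_of_sq_le (by norm_num; linarith)
  have hp : 1.75 ≤ √π := Real.le_sqrt_of_sq_le (by norm_num; linarith [Real.pi_gt_d2])
  set e := Real.exp (-(0.43 * κ)) with he
  have he0 : 0 < e := Real.exp_pos _
  have hpow := pow_six_mul_exp_neg_le_one hκ58
  rw [← he] at hpow
  have h1y : 1 ≤ y * (4 * κ) := by
    rw [hy, hκ]
    field_simp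
    linarith [Real.pi_gt_three]
  have e1 : 172 * Real.exp (-(0.21 * κ)) ≤ 1 := by
    have h12 : Real.exp (-(0.21 * κ)) ≤ Real.exp (-12) := Real.exp_le_exp.mpr (by linarith)
    have h2 : Real.exp (-12) = Real.exp (-1) ^ 12 := by
      rw [← Real.exp_nat_mul]; norm_num
    have h3 := Real.exp_neg_one_lt_d9
    have h4 : Real.exp (-1) ^ 12 ≤ 0.37 ^ 12 :=
      pow_le_pow_left₀ (Real.exp_pos _).le (by linarith) 12
    have h5 : (0.37 : ℝ) ^ 12 ≤ 1 / 172 := by norm_num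
    linarith
  have x1 : Real.exp (38 / 37 * κ) ≤ Real.exp (2 * κ) * e * Real.exp (-(0.21 * κ)) := by
    rw [he, ← Real.exp_add, ← Real.exp_add, Real.exp_le_exp]; linarith
  have x2 : Real.exp (2 * κ - 24 / 37 * κ) ≤ Real.exp (2 * κ) * e * Real.exp (-(0.21 * κ)) := by
    rw [he, ← Real.exp_add, ← Real.exp_add, Real.exp_le_exp]; linarith
  have x3 : Real.exp (2 * κ - 0.43 * κ) = Real.exp (2 * κ) * e := by
    rw [he, ← Real.exp_add]; ring_nf
  rw [x3]
  set X := Real.exp (2 * κ) with hX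
  have hX0 : 0 < X := Real.exp_pos _
  have hXe : 0 < X * e := by positivity
  have b1 : 28 * Real.exp (38 / 37 * κ) + 144 * Real.exp (2 * κ - 24 / 37 * κ) ≤ X * e := by
    nlinarith [mul_le_mul_of_nonneg_left e1 hXe.le]
  have hyy : 0 < y * √y := by positivity
  have b2 : 2 * √y * (X * e) ≤ y * √y * (8 * κ * (X * e)) := by
    nlinarith [mul_le_mul_of_nonneg_right h1y (by positivity : 0 ≤ 2 * √y * (X * e))]
  have b3 : y * √y * (28 * Real.exp (38 / 37 * κ) + 144 * Real.exp (2 * κ - 24 / 37 * κ)) +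
      2 * √y * (X * e) ≤ y * √y * X * (9 * κ * e) := by
    nlinarith [mul_le_mul_of_nonneg_left b1 hyy.le, mul_pos hyy hXe]
  refine b3.trans ?_
  rw [← mainTerm_eq hY0 hy hκ, ← hX]
  have hdom : 9 * κ * e ≤ √π * (√κ - 1 / (2 * √κ)) / κ / κ ^ 4 := by
    rw [div_div, le_div_iff₀ (by positivity)]
    have h2 : 1 / (2 * √κ) ≤ 0.1 := by
      rw [div_le_iff₀ (by positivity)]; linarith
    have h3 : 1.75 * 7.5 ≤ √π * (√κ - 1 / (2 * √κ)) :=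
      mul_le_mul hp (by linarith) (by norm_num) (by positivity)
    calc 9 * κ * e * (κ * κ ^ 4) = 9 * (κ ^ 6 * e) := by ring
      _ ≤ 9 := by linarith
      _ ≤ _ := by linarith
  calc y * √y * X * (9 * κ * e)
      ≤ y * √y * X * (√π * (√κ - 1 / (2 * √κ)) / κ / κ ^ 4) := by gcongr
    _ = _ := by ring

end CircleMethod

end PartitionAsymptotics

namespace PartitionAsymptotics

section SecondDifference

/-- `π * √(24 x - 1) / 6`, the argument of the exponential in the main term. -/
noncomputable def expArg (x : ℝ) : ℝ := π * √(24 * x - 1) / 6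

lemma expArg_ge {x : ℝ} (hx : 2094 ≤ x) : 116 ≤ expArg x := by
  have h1 : 224 ≤ √(24 * x - 1) := Real.le_sqrt_of_sq_le (by norm_num; linarith)
  unfold expArg
  nlinarith [Real.pi_gt_d2]

/-- The logarithm of the main term, as a function of a real variable. -/
noncomputable def logMain (x : ℝ) : ℝ :=
  expArg x + Real.log (1 - 1 / expArg x) - Real.log (24 * x - 1) + Real.log √12

lemma abs_log_p_sub_logMain_le {n : ℕ} (hn : 2094 ≤ n) :
    |Real.log (p n) - logMain n| ≤ 1 / (n : ℝ) ^ 2 := by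
  have hx : (2094 : ℝ) ≤ n := by exact_mod_cast hn
  obtain ⟨Y, hYdef⟩ : ∃ Y, Y = √(24 * (n : ℝ) - 1) := ⟨_, rfl⟩
  obtain ⟨κ, hκ⟩ : ∃ κ, κ = π * Y / 12 := ⟨_, rfl⟩
  have hY : 224 ≤ Y := hYdef ▸ Real.le_sqrt_of_sq_le (by norm_num; linarith)
  have hN : Y ^ 2 = 24 * n - 1 := by rw [hYdef, Real.sq_sqrt (by linarith)]
  have hκ58 : 58 ≤ κ := by rw [hκ]; nlinarith [Real.pi_gt_d2]
  have hY0 : 0 < Y := by linarith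
  have hE : expArg n = 2 * κ := by rw [expArg, ← hYdef, hκ]; ring
  have hM := mainTerm_pos hY0 hκ58
  have hlogM : logMain n = Real.log (mainTerm Y κ) := by
    have h1 : 1 / (2 * κ) < 1 := by rw [div_lt_one (by linarith)]; linarith
    rw [mainTerm, Real.log_mul (by positivity) (by linarith), Real.log_mul (by positivity)
      (Real.exp_pos _).ne', Real.log_div (by positivity) (by positivity), Real.log_exp, logMain,
      hE, hN]
    ring
  have hκ4 : 2 * (n : ℝ) ^ 2 ≤ κ ^ 4 := by
    have hκ2 : 1.5 * (n : ℝ) ≤ κ ^ 2 := by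
      have h1 : κ ^ 2 = π ^ 2 * (24 * n - 1) / 144 := by rw [hκ, ← hN]; ring
      have h2 : 9.8 ≤ π ^ 2 := by nlinarith [Real.pi_gt_d2]
      rw [h1]
      nlinarith
    nlinarith
  have h := abs_p_sub_mainTerm_le hκ58 (by linarith) hN hκ
  obtain ⟨δ, hδ⟩ : ∃ δ, δ = 1 / (2 * (n : ℝ) ^ 2) := ⟨_, rfl⟩
  have hδ0 : 0 < δ := by rw [hδ]; positivity
  have hδ1 : δ ≤ 1 / 2 := by
    rw [hδ]
    apply one_div_le_one_div_of_le (by norm_num)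
    nlinarith
  have hδ2 : 1 / (n : ℝ) ^ 2 = 2 * δ := by rw [hδ]; field_simp
  obtain ⟨z, hz⟩ : ∃ z, z = p n / mainTerm Y κ := ⟨_, rfl⟩
  have hzδ : |z - 1| ≤ δ := by
    have h1 : z - 1 = (p n - mainTerm Y κ) / mainTerm Y κ := by rw [hz]; field_simp
    rw [h1, abs_div, abs_of_pos hM, div_le_iff₀ hM]
    refine h.trans ?_
    rw [hδ, one_div_mul_eq_div]
    gcongr
  obtain ⟨hz1, hz2⟩ := abs_le.mp hzδ
  have hz0 : 0 < z := by linarith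
  have hlog : Real.log (p n) - logMain n = Real.log z := by
    rw [hlogM, hz, Real.log_div (p_pos n).ne' hM.ne']
  rw [hlog, hδ2, abs_le]
  constructor
  · have h1 := Real.one_sub_inv_le_log_of_pos hz0
    have h2 : z⁻¹ ≤ 1 + 2 * δ := by
      rw [inv_le_iff_one_le_mul₀ hz0]
      nlinarith
    linarith
  · linarith [Real.log_le_sub_one_of_pos hz0]

/-- The second central difference. -/
noncomputable def secondDiff (f : ℝ → ℝ) (x : ℝ) : ℝ := f (x + 1) + f (x - 1) - 2 * f x

lemma secondDiff_mul_nonneg {f g : ℝ → ℝ} {x : ℝ} (hf : 0 ≤ secondDiff f x)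
    (hg : 0 ≤ secondDiff g x) (hf0 : 0 ≤ f x) (hg0 : 0 ≤ g x)
    (hf' : f (x + 1) ≤ f (x - 1)) (hg' : g (x + 1) ≤ g (x - 1)) :
    0 ≤ secondDiff (fun t ↦ f t * g t) x := by
  unfold secondDiff at *
  nlinarith [mul_nonneg (sub_nonneg.mpr hf') (sub_nonneg.mpr hg'), mul_nonneg hf hg,
    mul_nonneg hf hg0, mul_nonneg hg hf0]

variable {x : ℝ}

lemma sqrt_add_sqrt_le {a b c : ℝ} (ha : 0 ≤ a) (hb : 0 ≤ b) (h : a + b ≤ 2 * c) :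
    √a + √b ≤ 2 * √c := by
  have hc : 0 ≤ c := by linarith
  refine abs_le_of_sq_le_sq' ?_ (by positivity) |>.2
  nlinarith [Real.sq_sqrt ha, Real.sq_sqrt hb, Real.sq_sqrt hc, sq_nonneg (√a - √b)]

lemma secondDiff_inv (hx : 1 < x) :
    secondDiff (fun t ↦ 1 / t) x = 2 / (x * (x ^ 2 - 1)) := by
  have h1 : x - 1 ≠ 0 := by linarith
  have h2 : x + 1 ≠ 0 := by linarith
  have h3 : x ^ 2 - 1 = (x - 1) * (x + 1) := by ring
  rw [secondDiff, h3]
  field_simp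
  ring

lemma inv_sqrt_le {z w : ℝ} (hz : 0 < z) (hw : 0 < w) (h : 1 ≤ w ^ 2 * z) : 1 / √z ≤ w := by
  rw [div_le_iff₀ (Real.sqrt_pos.mpr hz)]
  refine abs_le_of_sq_le_sq' ?_ (by positivity) |>.2
  rw [one_pow, mul_pow, Real.sq_sqrt hz.le]
  exact h

lemma secondDiff_inv_sqrt_le (hx : 4 ≤ x) :
    secondDiff (fun t ↦ 1 / √t) x ≤ 1 / √x * (3 / (4 * x ^ 2) + 1 / (2 * x ^ 3)) := by
  obtain ⟨t, ht⟩ : ∃ t, t = 1 / x := ⟨_, rfl⟩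
  have hx0 : 0 < x := by linarith
  have ht0 : 0 < t := by rw [ht]; positivity
  have ht1 : t ≤ 1 / 4 := by rw [ht]; exact one_div_le_one_div_of_le (by norm_num) hx
  have h1 : 1 / √(1 + t) ≤ 1 - t / 2 + 3 * t ^ 2 / 8 :=
    inv_sqrt_le (by linarith) (by nlinarith) (by nlinarith [pow_pos ht0 3, pow_pos ht0 4])
  have h2 : 1 / √(1 - t) ≤ 1 + t / 2 + 3 * t ^ 2 / 8 + t ^ 3 / 2 := by
    refine inv_sqrt_le (by linarith) (by positivity) ?_
    have : (1 + t / 2 + 3 * t ^ 2 / 8 + t ^ 3 / 2) ^ 2 * (1 - t) - 1 =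
        t ^ 3 * (3 / 8 - 47 / 64 * t - 17 / 64 * t ^ 2 - t ^ 3 / 8 - t ^ 4 / 4) := by ring
    have h3 : 0 ≤ 3 / 8 - 47 / 64 * t - 17 / 64 * t ^ 2 - t ^ 3 / 8 - t ^ 4 / 4 := by
      have := pow_le_pow_left₀ ht0.le ht1 2
      have := pow_le_pow_left₀ ht0.le ht1 3
      have := pow_le_pow_left₀ ht0.le ht1 4
      norm_num at *
      linarith
    nlinarith [mul_nonneg (pow_nonneg ht0.le 3) h3]
  have e1 : x + 1 = x * (1 + t) := by rw [ht]; field_simp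
  have e2 : x - 1 = x * (1 - t) := by rw [ht]; field_simp
  have e3 : 3 / (4 * x ^ 2) + 1 / (2 * x ^ 3) = 3 / 4 * t ^ 2 + t ^ 3 / 2 := by
    rw [ht]; field_simp
  rw [secondDiff, e1, e2, e3, Real.sqrt_mul hx0.le, Real.sqrt_mul hx0.le]
  have e4 : ∀ s : ℝ, 1 / (√x * s) = 1 / √x * (1 / s) := fun s ↦ by rw [one_div_mul_one_div]
  rw [e4, e4]
  have h0 : 0 < 1 / √x := by positivity
  nlinarith [mul_le_mul_of_nonneg_left h1 h0.le, mul_le_mul_of_nonneg_left h2 h0.le]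

lemma secondDiff_inv_sqrt_nonneg (hx : 1 < x) : 0 ≤ secondDiff (fun t ↦ 1 / √t) x := by
  have h1 : 0 < √(x + 1) := Real.sqrt_pos.mpr (by linarith)
  have h2 : 0 < √(x - 1) := Real.sqrt_pos.mpr (by linarith)
  have h3 : 0 < √x := Real.sqrt_pos.mpr (by linarith)
  have h := sqrt_add_sqrt_le (a := x + 1) (b := x - 1) (c := x) (by linarith) (by linarith)
    (by linarith)
  have h4 : 2 / √x ≤ 1 / √(x + 1) + 1 / √(x - 1) := by
    rw [div_add_div _ _ h1.ne' h2.ne', div_le_div_iff₀ h3 (by positivity)]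
    nlinarith [sq_nonneg (√(x + 1) - √(x - 1))]
  have h5 : 2 / √x = 2 * (1 / √x) := by ring
  rw [secondDiff]
  linarith

lemma secondDiff_expArg_div_le (hx : 4 ≤ x) :
    secondDiff (fun t ↦ expArg t / t) x ≤
      π * √24 / 6 * (1 / √x * (3 / (4 * x ^ 2) + 1 / (2 * x ^ 3))) := by
  have hfac : ∀ t : ℝ, 1 ≤ t → expArg t / t =
      π * √24 / 6 * (1 / √t - 1 / √t * (1 - √(1 - 1 / (24 * t)))) := by
    intro t ht
    have h0 : 0 < √t := Real.sqrt_pos.mpr (by linarith)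
    have h1 : 24 * t - 1 = 24 * (t * (1 - 1 / (24 * t))) := by field_simp
    have h2 : √t ^ 2 = t := Real.sq_sqrt (by linarith)
    rw [expArg, h1, Real.sqrt_mul (by norm_num), Real.sqrt_mul (by linarith)]
    generalize √(1 - 1 / (24 * t)) = b
    nth_rw 2 [← h2]
    field_simp
    ring
  have hP : ∀ t : ℝ, 1 ≤ t → 0 ≤ 1 - 1 / (24 * t) := fun t ht ↦ by
    have : 1 / (24 * t) ≤ 1 := by rw [div_le_one (by linarith)]; linarith
    linarith
  have hinv : (1 / (24 * (x + 1)) + 1 / (24 * (x - 1))) = 1 / 24 * (1 / (x + 1) + 1 / (x - 1)) := by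
    rw [one_div_mul_eq_div, add_div, div_div, div_div, mul_comm (x + 1), mul_comm (x - 1)]
  have hconv := secondDiff_inv (x := x) (by linarith)
  have hpos : 0 < 2 / (x * (x ^ 2 - 1)) := by
    have : 0 < x ^ 2 - 1 := by nlinarith
    positivity
  rw [secondDiff] at hconv
  have h := secondDiff_mul_nonneg (f := fun t ↦ 1 / √t) (g := fun t ↦ 1 - √(1 - 1 / (24 * t)))
    (x := x) (secondDiff_inv_sqrt_nonneg (by linarith)) ?_ (by positivity) ?_ ?_ ?_
  · have hm := mul_le_mul_of_nonneg_left (secondDiff_inv_sqrt_le hx)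
      (by positivity : 0 ≤ π * √24 / 6)
    have hm2 := mul_nonneg (by positivity : 0 ≤ π * √24 / 6) h
    refine le_trans (le_of_eq ?_) ((sub_le_self _ hm2).trans hm)
    simp only [secondDiff]
    rw [hfac x (by linarith), hfac (x + 1) (by linarith), hfac (x - 1) (by linarith)]
    ring
  · have h24 : 1 / (24 * x) = 1 / 24 * (1 / x) := by field_simp
    have := sqrt_add_sqrt_le (hP (x + 1) (by linarith)) (hP (x - 1) (by linarith))
      (c := 1 - 1 / (24 * x)) (by linarith)
    rw [secondDiff]
    linarith
  · have : √(1 - 1 / (24 * x)) ≤ 1 := by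
      have : 0 < 1 / (24 * x) := by positivity
      exact Real.sqrt_le_iff.mpr ⟨zero_le_one, by linarith⟩
    linarith
  · have : 0 < √(x - 1) := Real.sqrt_pos.mpr (by linarith)
    have h2 : √(x - 1) ≤ √(x + 1) := Real.sqrt_le_sqrt (by linarith)
    exact one_div_le_one_div_of_le this h2
  · have : 1 / (24 * (x + 1)) ≤ 1 / (24 * (x - 1)) :=
      one_div_le_one_div_of_le (by linarith) (by linarith)
    have := Real.sqrt_le_sqrt (by linarith : 1 - 1 / (24 * (x - 1)) ≤ 1 - 1 / (24 * (x + 1)))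
    linarith

lemma secondDiff_log_one_sub_div_le (hx : 2095 ≤ x) :
    secondDiff (fun t ↦ Real.log (1 - 1 / expArg t) / t) x ≤ 0 := by
  have k0 := expArg_ge (x := x) (by linarith)
  have k1 := expArg_ge (x := x + 1) (by linarith)
  have k2 := expArg_ge (x := x - 1) (by linarith)
  have hconc : expArg (x + 1) + expArg (x - 1) ≤ 2 * expArg x := by
    have := sqrt_add_sqrt_le (a := 24 * (x + 1) - 1) (b := 24 * (x - 1) - 1) (c := 24 * x - 1)
      (by linarith) (by linarith) (by linarith)
    unfold expArg
    nlinarith [Real.pi_pos]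
  have hmono : expArg (x - 1) ≤ expArg (x + 1) := by
    unfold expArg
    have : √(24 * (x - 1) - 1) ≤ √(24 * (x + 1) - 1) := Real.sqrt_le_sqrt (by linarith)
    gcongr
  set K := expArg x
  set K₁ := expArg (x + 1)
  set K₂ := expArg (x - 1)
  have hle : ∀ k : ℝ, 116 ≤ k → 0 < 1 / k ∧ 1 / k < 1 := fun k hk ↦
    ⟨by positivity, by rw [div_lt_one (by linarith)]; linarith⟩
  have hK := hle K k0
  have hK₁ := hle K₁ k1
  have hK₂ := hle K₂ k2
  have hsum : 2 * (1 / K) ≤ 1 / K₁ + 1 / K₂ := by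
    have : 2 * (1 / K) = 2 / K := by ring
    rw [this, div_add_div _ _ (by linarith) (by linarith), div_le_div_iff₀ (by linarith)
      (by nlinarith)]
    nlinarith [sq_nonneg (K₁ - K₂)]
  have hinv : 1 / K₁ ≤ 1 / K₂ := one_div_le_one_div_of_le (by linarith) hmono
  have h := secondDiff_mul_nonneg (f := fun t ↦ 1 / t) (g := fun t ↦ -Real.log (1 - 1 / expArg t))
    (x := x) ?_ ?_ (by positivity) ?_ ?_ ?_
  · rw [secondDiff] at h ⊢
    have e : ∀ t : ℝ, Real.log (1 - 1 / expArg t) / t = -(1 / t * -Real.log (1 - 1 / expArg t)) :=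
      fun t ↦ by ring
    rw [e, e, e]
    linarith
  · rw [secondDiff_inv (by linarith)]
    have : 0 < x ^ 2 - 1 := by nlinarith
    positivity
  · have hprod : Real.log (1 - 1 / K₁) + Real.log (1 - 1 / K₂) ≤ 2 * Real.log (1 - 1 / K) := by
      rw [← Real.log_mul (by linarith) (by linarith), ← Nat.cast_ofNat (n := 2), ← Real.log_pow]
      refine Real.log_le_log (mul_pos (by linarith) (by linarith)) ?_
      nlinarith [sq_nonneg (1 / K₁ - 1 / K₂)]
    simp only [secondDiff]
    linarith
  · have := Real.log_nonpos (x := 1 - 1 / K) (by linarith) (by linarith)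
    linarith
  · exact one_div_le_one_div_of_le (by linarith) (by linarith)
  · have := Real.log_le_log (x := 1 - 1 / K₂) (y := 1 - 1 / K₁) (by linarith) (by linarith)
    linarith

lemma le_secondDiff_log_div (hx : 2095 ≤ x) :
    2 * Real.log (24 * x - 1) / (x * (x ^ 2 - 1)) - 4.2 / x ^ 3 ≤
      secondDiff (fun t ↦ Real.log (24 * t - 1) / t) x := by
  have hx0 : 0 < x := by linarith
  have hd0 : 0 < 24 * x - 1 := by linarith
  have hd1 : 0 < 24 * (x + 1) - 1 := by linarith
  have hd2 : 0 < 24 * (x - 1) - 1 := by linarith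
  have hx1 : 0 < x + 1 := by linarith
  have hx2 : 0 < x - 1 := by linarith
  set l := Real.log (24 * x - 1) with hl
  have h1 : l + 24 / (24 * (x + 1) - 1) ≤ Real.log (24 * (x + 1) - 1) := by
    have h := Real.one_sub_inv_le_log_of_pos (div_pos hd1 hd0)
    rw [Real.log_div hd1.ne' hd0.ne', inv_div] at h
    have e : 1 - (24 * x - 1) / (24 * (x + 1) - 1) = 24 / (24 * (x + 1) - 1) := by
      field_simp
      ring
    linarith
  have h2 : l - 24 / (24 * (x - 1) - 1) ≤ Real.log (24 * (x - 1) - 1) := by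
    have h := Real.one_sub_inv_le_log_of_pos (div_pos hd2 hd0)
    rw [Real.log_div hd2.ne' hd0.ne', inv_div] at h
    have e : 1 - (24 * x - 1) / (24 * (x - 1) - 1) = -(24 / (24 * (x - 1) - 1)) := by
      field_simp
      ring
    linarith
  have h3 : (l + 24 / (24 * (x + 1) - 1)) / (x + 1) + (l - 24 / (24 * (x - 1) - 1)) / (x - 1) -
      2 * (l / x) ≤ secondDiff (fun t ↦ Real.log (24 * t - 1) / t) x := by
    rw [secondDiff]
    gcongr
  refine le_trans ?_ h3
  have hinv := secondDiff_inv (x := x) (by linarith)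
  rw [secondDiff] at hinv
  have h4 : (l + 24 / (24 * (x + 1) - 1)) / (x + 1) + (l - 24 / (24 * (x - 1) - 1)) / (x - 1) -
      2 * (l / x) = 2 * l / (x * (x ^ 2 - 1)) -
        (24 / ((24 * (x - 1) - 1) * (x - 1)) - 24 / ((24 * (x + 1) - 1) * (x + 1))) := by
    have : 2 * l / (x * (x ^ 2 - 1)) = l * (2 / (x * (x ^ 2 - 1))) := by ring
    rw [this, ← hinv, add_div, sub_div, div_div, div_div]
    ring
  rw [h4]
  have h5 : 24 / ((24 * (x - 1) - 1) * (x - 1)) - 24 / ((24 * (x + 1) - 1) * (x + 1)) ≤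
      4.2 / x ^ 3 := by
    rw [div_sub_div _ _ (by positivity) (by positivity), div_le_div_iff₀ (by positivity)
      (by positivity)]
    obtain ⟨m, rfl⟩ : ∃ m, x = m + 2095 := ⟨x - 2095, by ring⟩
    have hm : 0 ≤ m := by linarith
    rw [← sub_nonneg]
    ring_nf
    positivity
  linarith

theorem secondDiff_logMain_div_le (hx : 2095 ≤ x) :
    secondDiff (fun t ↦ logMain t / t) x ≤
      π * √24 / 6 * (1 / √x * (3 / (4 * x ^ 2) + 1 / (2 * x ^ 3))) - 13 / x ^ 3 := by
  have h1 := secondDiff_expArg_div_le (x := x) (by linarith)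
  have h2 := secondDiff_log_one_sub_div_le hx
  have h3 := le_secondDiff_log_div hx
  have h4 := secondDiff_inv (x := x) (by linarith)
  have hsplit : secondDiff (fun t ↦ logMain t / t) x = secondDiff (fun t ↦ expArg t / t) x +
      secondDiff (fun t ↦ Real.log (1 - 1 / expArg t) / t) x -
      secondDiff (fun t ↦ Real.log (24 * t - 1) / t) x +
      Real.log √12 * secondDiff (fun t ↦ 1 / t) x := by
    simp only [secondDiff, logMain]
    ring
  have hlog1 : 15 * Real.log 2 ≤ Real.log (24 * x - 1) := by
    rw [← Nat.cast_ofNat (n := 15), ← Real.log_pow]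
    exact Real.log_le_log (by positivity) (by norm_num; linarith)
  have hlog2 : Real.log √12 ≤ 2 * Real.log 2 := by
    rw [← Nat.cast_ofNat (n := 2) (R := ℝ), ← Real.log_pow]
    refine Real.log_le_log (by positivity) ?_
    rw [Real.sqrt_le_left (by positivity)]
    norm_num
  have h5 : 18 / x ^ 3 ≤ 2 / (x * (x ^ 2 - 1)) * (Real.log (24 * x - 1) - Real.log √12) := by
    have hx2 : 0 < x ^ 2 - 1 := by nlinarith
    have h6 : 2 / x ^ 3 ≤ 2 / (x * (x ^ 2 - 1)) :=
      div_le_div_of_nonneg_left (by norm_num) (by positivity) (by nlinarith)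
    have h7 : 0 < 2 / x ^ 3 := by positivity
    calc 18 / x ^ 3 = 2 / x ^ 3 * 9 := by ring
      _ ≤ _ := mul_le_mul h6 (by linarith [Real.log_two_gt_d9]) (by norm_num) (h7.le.trans h6)
  have h8 : (18 : ℝ) / x ^ 3 - 4.2 / x ^ 3 = 13.8 / x ^ 3 := by ring
  have h9 : 13 / x ^ 3 ≤ 13.8 / x ^ 3 := by gcongr; norm_num
  rw [hsplit, h4]
  have h10 : 2 * Real.log (24 * x - 1) / (x * (x ^ 2 - 1)) =
    2 / (x * (x ^ 2 - 1)) * Real.log (24 * x - 1) := by ring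
  linarith

/-- The comparison of the upper bound for the second difference with the claimed one. -/
lemma upper_bound_lt (hx : 2095 ≤ x) :
    π * √24 / 6 * (1 / √x * (3 / (4 * x ^ 2) + 1 / (2 * x ^ 3))) - 13 / x ^ 3 + 4.2 / x ^ 3 <
      3 * π / (√24 * x ^ ((5 : ℝ) / 2) + 3 * π) := by
  have hx0 : 0 < x := by linarith
  have hrpow : x ^ ((5 : ℝ) / 2) = x ^ 2 * √x := by
    rw [Real.sqrt_eq_rpow, ← Real.rpow_natCast, ← Real.rpow_add hx0]
    norm_num
  have hs24 : √24 ^ 2 = 24 := Real.sq_sqrt (by norm_num)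
  have hs0 : 0 < √24 := Real.sqrt_pos.mpr (by norm_num)
  have hr1 : 1 ≤ √x := Real.le_sqrt_of_sq_le (by linarith)
  have hr0 : 0 < √x := by linarith
  obtain ⟨c, hc⟩ : ∃ c, c = π * √24 / 8 := ⟨_, rfl⟩
  have hc0 : 0 < c := by rw [hc]; positivity
  have hc2 : c ≤ 2 := by
    rw [hc]
    have : √24 ≤ 4.9 := by rw [Real.sqrt_le_left (by norm_num)]; norm_num
    nlinarith [Real.pi_lt_d2, Real.pi_pos]
  obtain ⟨w, hw⟩ : ∃ w, w = x ^ 2 * √x := ⟨_, rfl⟩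
  have hw0 : 0 < w := by rw [hw]; positivity
  have hrhs : 3 * π / (√24 * x ^ ((5 : ℝ) / 2) + 3 * π) = c / (w + c) := by
    rw [hrpow, ← hw, div_eq_div_iff (by positivity) (by positivity), hc]
    linear_combination (-(w * π / 8)) * hs24
  have hlhs : π * √24 / 6 * (1 / √x * (3 / (4 * x ^ 2) + 1 / (2 * x ^ 3))) =
      c / w + 2 * c / (3 * √x) / x ^ 3 := by
    rw [hc, hw]
    field_simp
    ring
  have hsmall : 2 * c / (3 * √x) ≤ 2 := by
    rw [div_le_iff₀ (by positivity)]
    nlinarith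
  have hgap : c / w - c / (w + c) ≤ 4 / x ^ 3 := by
    rw [div_sub_div _ _ hw0.ne' (by positivity), div_le_div_iff₀ (by positivity) (by positivity)]
    have h1 : x ^ 3 ≤ w * w := by
      have : w * w = x ^ 5 := by
        rw [hw]; linear_combination x ^ 4 * Real.sq_sqrt hx0.le
      rw [this]
      exact pow_le_pow_right₀ (by linarith) (by norm_num)
    have h2 : c * (w + c) - w * c = c ^ 2 := by ring
    rw [h2]
    have h3 : c ^ 2 ≤ 4 := by nlinarith
    have h4 : 0 < w * c := by positivity
    nlinarith [pow_pos hx0 3]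
  rw [hrhs, hlhs]
  have h3 : 0 < 1 / x ^ 3 := by positivity
  have e1 : 2 * c / (3 * √x) / x ^ 3 ≤ 2 / x ^ 3 := by gcongr
  have e2 : ∀ a : ℝ, a / x ^ 3 = a * (1 / x ^ 3) := fun a ↦ by ring
  rw [e2] at *
  rw [e2 13, e2 4.2]
  rw [e2 2] at e1
  linarith

end SecondDifference

end PartitionAsymptotics

theorem second_difference_log_nth_root_p_upper_bound (n : ℕ) (hn : 2095 ≤ n) :
    Real.log (p (n + 1)) / ((n : ℝ) + 1) + Real.log (p (n - 1)) / ((n : ℝ) - 1) -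
        2 * Real.log (p n) / (n : ℝ) <
      3 * π / (Real.sqrt 24 * (n : ℝ) ^ ((5 : ℝ) / 2) + 3 * π) := by
  have hx : (2095 : ℝ) ≤ n := by exact_mod_cast hn
  have h0 := PartitionAsymptotics.abs_log_p_sub_logMain_le (n := n) (by omega)
  have h1 := PartitionAsymptotics.abs_log_p_sub_logMain_le (n := n + 1) (by omega)
  have h2 := PartitionAsymptotics.abs_log_p_sub_logMain_le (n := n - 1) (by omega)
  have h3 := PartitionAsymptotics.secondDiff_logMain_div_le hx
  have h4 := PartitionAsymptotics.upper_bound_lt hx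
  rw [Nat.cast_sub (by omega)] at h2
  push_cast at h1 h2
  rw [PartitionAsymptotics.secondDiff] at h3
  generalize PartitionAsymptotics.logMain = L at *
  generalize Real.log (p n) = A₀ at *
  generalize Real.log (p (n + 1)) = A₁ at *
  generalize Real.log (p (n - 1)) = A₂ at *
  generalize (n : ℝ) = x at *
  have hx1 : 0 < x - 1 := by linarith
  have hx0 : 0 < x := by linarith
  have b1 : A₁ / (x + 1) ≤ L (x + 1) / (x + 1) + 1 / (x + 1) ^ 3 := by
    have : L (x + 1) / (x + 1) + 1 / (x + 1) ^ 3 = (L (x + 1) + 1 / (x + 1) ^ 2) / (x + 1) := by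
      field_simp
    rw [this]
    gcongr
    linarith [(abs_le.mp h1).2]
  have b2 : A₂ / (x - 1) ≤ L (x - 1) / (x - 1) + 1 / (x - 1) ^ 3 := by
    have : L (x - 1) / (x - 1) + 1 / (x - 1) ^ 3 = (L (x - 1) + 1 / (x - 1) ^ 2) / (x - 1) := by
      field_simp
    rw [this]
    gcongr
    linarith [(abs_le.mp h2).2]
  have b0 : 2 * (L x / x) - 2 / x ^ 3 ≤ 2 * A₀ / x := by
    have : 2 * (L x / x) - 2 / x ^ 3 = 2 * (L x - 1 / x ^ 2) / x := by
      field_simp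
    rw [this]
    gcongr
    linarith [(abs_le.mp h0).1]
  have e1 : 1 / (x + 1) ^ 3 ≤ 1 / x ^ 3 :=
    one_div_le_one_div_of_le (by positivity) (pow_le_pow_left₀ hx0.le (by linarith) 3)
  have e2 : 1 / (x - 1) ^ 3 ≤ 1.2 / x ^ 3 := by
    rw [div_le_div_iff₀ (by positivity) (by positivity)]
    obtain ⟨m, rfl⟩ : ∃ m, x = m + 2095 := ⟨x - 2095, by ring⟩
    have hm : 0 ≤ m := by linarith
    rw [← sub_nonneg]
    ring_nf
    positivity
  have e3 : 1 / x ^ 3 + 1.2 / x ^ 3 + 2 / x ^ 3 = 4.2 / x ^ 3 := by ring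
  linarith
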